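/- arXiv:1203.1720 — 2 statements merged into one kernel-verified Lean document; each statement's English description precedes it below -/
import Mathlib

section
/- Let B be a non-shellable triangulated 3-ball with no interior vertices (such as Rudin's ball), and let K = B ∗ σ be the join of B with a simplex σ of dimension k ≥ 2. Then K is a 2-stacked (k+4)-ball which is not shellable. -/
open Finset

variable {V : Type*} [DecidableEq V] [Fintype V]

/-- A (possibly empty) simplicial complex on the vertex set `V`,
given as its set of faces: a collection of finite subsets of `V`
closed under taking subsets. -/
def IsComplex (Δ : Set (Finset V)) : Prop :=
  ∀ F ∈ Δ, ∀ G ⊆ F, G ∈ Δ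

/-- `skc Δ i` is the complex `Δ(i) = {F ⊆ V : skelᵢ(2^F) ⊆ Δ}`:
all subsets `F` of `V` all of whose subsets of cardinality at most `i+1`
are faces of `Δ`. -/
def skc (Δ : Set (Finset V)) (i : ℕ) : Set (Finset V) :=
  {F | ∀ G ⊆ F, G.card ≤ i + 1 → G ∈ Δ}

/-- The `k`-skeleton of a complex: faces of cardinality at most `k+1`. -/
def skel (Δ : Set (Finset V)) (k : ℕ) : Set (Finset V) :=
  {F ∈ Δ | F.card ≤ k + 1}

/-- A missing face of `Δ`: a non-face all of whose proper subsets are faces. -/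
def IsMissingFace (Δ : Set (Finset V)) (F : Finset V) : Prop :=
  F ∉ Δ ∧ ∀ G ⊂ F, G ∈ Δ

/-- The link of a face. -/
def link (Δ : Set (Finset V)) (F : Finset V) : Set (Finset V) :=
  {G | Disjoint F G ∧ F ∪ G ∈ Δ}

/-- `numFacesCard Δ j` is `f_{j-1}(Δ)`, the number of faces of `Δ` of
cardinality `j`. -/
noncomputable def numFacesCard (Δ : Set (Finset V)) (j : ℕ) : ℕ :=
  {F : Finset V | F ∈ Δ ∧ F.card = j}.ncard

/-- The `h`-numbers of a `(d-1)`-dimensional complex: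
`h_i = ∑_{j=0}^{i} (-1)^{i-j} C(d-j, i-j) f_{j-1}`. -/
noncomputable def hVec (Δ : Set (Finset V)) (d i : ℕ) : ℤ :=
  ∑ j ∈ Finset.range (i + 1),
    (-1 : ℤ) ^ (i - j) * ((d - j).choose (i - j)) * (numFacesCard Δ j)

/- ### Geometric realization, shellability, joins -/

section Realization

variable {V : Type*} [Fintype V] [DecidableEq V]

/-- The geometric realization of a complex `Δ` on `V`, as a subspace of
`ℝ^V`: convex combinations of vertices supported on a face of `Δ`. -/
def realization (Δ : Set (Finset V)) : Set (V → ℝ) :=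
  {f | (∀ v, 0 ≤ f v) ∧ (∑ v, f v) = 1 ∧ ∃ F ∈ Δ, ∀ v, f v ≠ 0 → v ∈ F}

/-- `Δ` is a triangulation of the `d`-ball: its geometric realization is
homeomorphic to the closed unit ball of `ℝ^d`. -/
def IsTriangulatedBall (Δ : Set (Finset V)) (d : ℕ) : Prop :=
  IsComplex Δ ∧
  Nonempty (↥(realization Δ) ≃ₜ
    ↥(Metric.closedBall (0 : EuclideanSpace ℝ (Fin d)) 1))

/-- The boundary complex of a triangulated `d`-ball, combinatorially: all
faces contained in some `(d-1)`-dimensional face lying in exactly one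
facet. -/
def ballBoundary (Δ : Set (Finset V)) (d : ℕ) : Set (Finset V) :=
  {F | ∃ G ∈ Δ, F ⊆ G ∧ G.card = d ∧
    (∃! H, H ∈ Δ ∧ H.card = d + 1 ∧ G ⊆ H)}

/-- `L` is a shelling order of the `d`-dimensional complex `Δ`: a linear
order `F_1, …, F_t` of its facets such that each `F_i ∩ (∪_{j<i} 2^{F_j})`
is pure of dimension `d-1`. -/
def IsShelling (Δ : Set (Finset V)) (d : ℕ) (L : List (Finset V)) : Prop :=
  L.Nodup ∧ (∀ F, F ∈ L ↔ F ∈ Δ ∧ F.card = d + 1) ∧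
  ∀ i : Fin L.length, 0 < (i : ℕ) → ∀ G : Finset V,
    (G ⊆ L.get i ∧ ∃ j, j < i ∧ G ⊆ L.get j) →
    ∃ G', G' ⊆ L.get i ∧ (∃ j, j < i ∧ G' ⊆ L.get j) ∧ G ⊆ G' ∧ G'.card = d

/-- `Δ` is a shellable pure `d`-dimensional complex. -/
def IsShellable (Δ : Set (Finset V)) (d : ℕ) : Prop :=
  (∀ F ∈ Δ, ∃ H ∈ Δ, F ⊆ H ∧ H.card = d + 1) ∧ ∃ L, IsShelling Δ d L

end Realization

/-- The join of two simplicial complexes on disjoint vertex sets. -/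
def simplicialJoin {V W : Type*} [DecidableEq V] [DecidableEq W]
    (A : Set (Finset V)) (B : Set (Finset W)) : Set (Finset (V ⊕ W)) :=
  {H | ∃ F ∈ A, ∃ G ∈ B,
    H = F.map ⟨Sum.inl, Sum.inl_injective⟩ ∪ G.map ⟨Sum.inr, Sum.inr_injective⟩}

/-!
A facet of `B ∗ σ` is a facet of `B` together with all of `σ`. Hence a codimension one face
`G ∪ σ` lies in exactly as many facets as `G` does in `B`, a codimension one face missing a vertex
of `σ` lies in exactly one, and deleting `σ` turns a shelling of `B ∗ σ` into one of `B`. The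
interior faces of `B ∗ σ` are therefore of the form `E ∪ σ` with `E` interior in `B`, and such an
`E` has at least two vertices.

This presupposes that a triangulated ball is pure of the expected dimension, which follows from the
fact that no open part of a ball embeds in a Euclidean space of smaller dimension. If `f` were such
an embedding of a closed ball and `G` an extension of its inverse to the whole space, then a smooth
approximation of `G` would omit arbitrarily small values `c`; but that approximation composed with
`f`, minus `c`, is close to the identity of the ball, and a map close to the identity has a zero by
the no-retraction theorem. The latter is proved following Milnor and Rogers: if a C¹ self-map
`r` of a convex body fixes the boundary, then `x ↦ x + t (r x - x)` is a bijection of the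
interior for small `t > 0`, so `∫ det (1 + t (Dr - 1))`, a polynomial in `t`, is constantly the
volume of the body, also at `t = 1`; but the integrand there would vanish for a retraction onto
the sphere.

That `B ∗ σ` is a ball is seen by comparison with a join of two simplices, which is a simplex:
homeomorphisms of realizations extend radially to the cones over them, preserving the sum of the
coordinates, and a point of a join is a pair of points of cones with total mass one.
-/

section Degree

open MeasureTheory Metric Set Topology
open scoped NNReal Polynomial

lemma nonempty_inter_frontier_of_isPreconnected {X : Type*} [TopologicalSpace X] {s t : Set X}
    (ht : IsPreconnected t) (hs : (t ∩ s).Nonempty) (hsc : (t ∩ sᶜ).Nonempty) :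
    (t ∩ frontier s).Nonempty := by
  by_contra hdisj
  have hnot : ∀ x ∈ t, x ∈ closure s → x ∈ interior s := fun x hxt hx => by
    by_contra hint
    exact hdisj ⟨x, hxt, hx, hint⟩
  obtain ⟨x, hxt, hx⟩ := hs
  obtain ⟨y, hyt, hy⟩ := hsc
  obtain ⟨z, -, hzi, hzc⟩ := ht (interior s) (closure s)ᶜ isOpen_interior
    isClosed_closure.isOpen_compl (fun z hz => (em (z ∈ closure s)).imp (hnot z hz) id)
    ⟨x, hxt, hnot x hxt (subset_closure hx)⟩ ⟨y, hyt, fun h => hy (interior_subset (hnot y hyt h))⟩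
  exact hzc (interior_subset_closure hzi)

lemma bijective_add_of_contractingWith {E : Type*} [NormedAddCommGroup E] [CompleteSpace E]
    {C : ℝ≥0} {g : E → E} (hg : ContractingWith C g) : Function.Bijective fun x => x + g x := by
  refine (Function.bijective_iff_existsUnique _).2 fun y => ?_
  have hy : ContractingWith C fun x => y - g x :=
    ⟨hg.1, by simpa using (LipschitzWith.const y).sub hg.2⟩
  have isFixedPt_iff : ∀ x, Function.IsFixedPt (fun x => y - g x) x ↔ x + g x = y := fun x => by
    rw [Function.IsFixedPt, sub_eq_iff_eq_add, eq_comm]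
  exact ⟨_, (isFixedPt_iff _).1 hy.fixedPoint_isFixedPt,
    fun x hx => hy.fixedPoint_unique ((isFixedPt_iff x).2 hx)⟩

variable {E : Type*} [NormedAddCommGroup E] [NormedSpace ℝ E]

lemma lipschitzWith_indicator_of_frontier_eq_zero {F : Type*} [SeminormedAddCommGroup F]
    {C : ℝ≥0} {s : Set E} {f : E → F} (hs : IsClosed s) (hf : LipschitzOnWith C f s)
    (h0 : ∀ x ∈ frontier s, f x = 0) : LipschitzWith C (s.indicator f) := by
  have crossing : ∀ x ∈ s, ∀ y ∉ s, ‖f x‖ ≤ C * ‖x - y‖ := by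
    intro x hx y hy
    obtain ⟨z, hz, hzs⟩ := nonempty_inter_frontier_of_isPreconnected
      (convex_segment (𝕜 := ℝ) x y).isPreconnected
      ⟨x, left_mem_segment ℝ x y, hx⟩ ⟨y, right_mem_segment ℝ x y, hy⟩
    calc ‖f x‖ = ‖f x - f z‖ := by rw [h0 z hzs, sub_zero]
      _ ≤ C * ‖x - z‖ := hf.norm_sub_le hx (hs.frontier_subset hzs)
      _ ≤ C * ‖x - y‖ := by
        rw [norm_sub_rev x z, norm_sub_rev x y]
        gcongr
        exact norm_sub_le_of_mem_segment hz
  refine lipschitzWith_iff_norm_sub_le.2 fun x y => ?_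
  by_cases hx : x ∈ s <;> by_cases hy : y ∈ s
  · simpa only [hx, hy, indicator_of_mem] using hf.norm_sub_le hx hy
  · simpa [hx, hy] using crossing x hx y hy
  · simpa [hx, hy, norm_sub_rev x y] using crossing y hy x hx
  · simp only [hx, hy, not_false_eq_true, indicator_of_notMem, sub_zero, norm_zero]
    positivity

lemma bijOn_interior_add_smul_sub [CompleteSpace E] {K : Set E} (hK : IsClosed K)
    (hconv : Convex ℝ K) {r : E → E} (hmaps : MapsTo r K K) (hfix : ∀ x ∈ frontier K, r x = x)
    {C t : ℝ≥0} (hC : LipschitzOnWith C (fun x => r x - x) K) (ht : t < 1) (htC : t * C < 1) :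
    BijOn (fun x => x + t • (r x - x)) (interior K) (interior K) := by
  let g : E → E := K.indicator fun x => t • (r x - x)
  have hg : ContractingWith (t * C) g := by
    refine ⟨htC, lipschitzWith_indicator_of_frontier_eq_zero hK ?_ fun x hx => by simp [hfix x hx]⟩
    simpa [Function.comp_def, NNReal.smul_def] using
      (lipschitzWith_smul (t : ℝ)).comp_lipschitzOnWith hC
  have hbij := bijective_add_of_contractingWith hg
  have hmapsTo : MapsTo (fun x => x + g x) (interior K) (interior K) := by
    intro x hx
    have hxK := interior_subset hx
    have hcombo := hconv.combo_interior_self_mem_interior hx (hmaps hxK)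
      (sub_pos.2 (NNReal.coe_lt_one.2 ht)) t.coe_nonneg (sub_add_cancel 1 (t : ℝ))
    convert hcombo using 1
    simp only [g, indicator_of_mem hxK, NNReal.smul_def]
    module
  have hid : ∀ x ∉ interior K, x + g x = x := by
    intro x hx
    by_cases hxK : x ∈ K
    · simp [g, hxK, hfix x ⟨subset_closure hxK, hx⟩]
    · simp [g, hxK]
  have hbijOn : BijOn (fun x => x + g x) (interior K) (interior K) := by
    refine ⟨hmapsTo, hbij.injective.injOn, fun y hy => ?_⟩
    obtain ⟨x, rfl⟩ := hbij.surjective y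
    refine ⟨x, ?_, rfl⟩
    by_contra hx
    exact hx (hid x hx ▸ hy)
  exact hbijOn.congr fun x hx => by simp [g, interior_subset hx]

lemma continuous_det_one_add_smul_fderiv_sub_one {r : E → E} (hr : ContDiff ℝ 1 r) :
    Continuous fun z : ℝ × E => (1 + z.1 • (fderiv ℝ r z.2 - 1)).det :=
  ContinuousLinearMap.continuous_det.comp <| continuous_const.add <| continuous_fst.smul <|
    ((hr.continuous_fderiv one_ne_zero).comp continuous_snd).sub continuous_const

variable [FiniteDimensional ℝ E]

lemma exists_polynomial_eval_eq_det_one_add_smul (A : E →L[ℝ] E) :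
    ∃ p : ℝ[X], p.natDegree ≤ Module.finrank ℝ E ∧ ∀ t : ℝ, p.eval t = (1 + t • A).det := by
  let b := Module.finBasis ℝ E
  let M := LinearMap.toMatrix b b A
  refine ⟨((Polynomial.X : ℝ[X]) • M.map Polynomial.C +
    (1 : Matrix _ _ ℝ).map Polynomial.C).det, ?_, ?_⟩
  · simpa using Polynomial.natDegree_det_X_add_C_le M 1
  · intro t
    have hmatrix : LinearMap.toMatrix b b (1 + t • A : E →L[ℝ] E) = 1 + t • M := by
      rw [ContinuousLinearMap.toLinearMap_add,
        ContinuousLinearMap.toLinearMap_smul, map_add, map_smul]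
      exact congrArg (· + t • M) (LinearMap.toMatrix_one b)
    rw [ContinuousLinearMap.det, ← LinearMap.det_toMatrix b, hmatrix,
      ← Polynomial.coe_evalRingHom, RingHom.map_det]
    congr 1
    ext i j
    by_cases h : i = j <;> simp [h, mul_comm t, add_comm]

lemma exists_polynomial_eval_eq_integral {α : Type*} [MeasurableSpace α] {μ : Measure α} {n : ℕ}
    {p : α → ℝ[X]} (hdeg : ∀ x, (p x).natDegree ≤ n)
    (hint : ∀ t : ℝ, Integrable (fun x => (p x).eval t) μ) :
    ∃ q : ℝ[X], ∀ t : ℝ, q.eval t = ∫ x, (p x).eval t ∂μ := by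
  let S := Finset.range (n + 1)
  let node : ℕ → ℝ := Nat.cast
  have interpolate : ∀ (x : α), p x = Lagrange.interpolate S node fun i => (p x).eval (node i) :=
    fun x => Lagrange.eq_interpolate Nat.cast_injective.injOn <| by
      rw [Finset.card_range]
      exact Polynomial.degree_le_natDegree.trans_lt (by exact_mod_cast Nat.lt_succ_of_le (hdeg x))
  refine ⟨Lagrange.interpolate S node fun i => ∫ x, (p x).eval (node i) ∂μ, fun t => ?_⟩
  have heval : ∀ c : ℕ → ℝ, (Lagrange.interpolate S node c).eval t =
      ∑ i ∈ S, c i * (Lagrange.basis S node i).eval t := fun c => by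
    simp [Lagrange.interpolate_apply, Polynomial.eval_finsetSum]
  calc _ = ∑ i ∈ S, ∫ x, (p x).eval (node i) * (Lagrange.basis S node i).eval t ∂μ := by
        simp only [heval, integral_mul_const]
    _ = ∫ x, ∑ i ∈ S, (p x).eval (node i) * (Lagrange.basis S node i).eval t ∂μ :=
        (integral_finsetSum _ fun i _ => (hint _).mul_const _).symm
    _ = ∫ x, (p x).eval t ∂μ := by
        congr with x
        rw [← heval, ← interpolate x]

variable [MeasurableSpace E] [BorelSpace E] (μ : Measure E) [μ.IsAddHaarMeasure]

lemma setIntegral_det_eq_measureReal_image {s : Set E} (hs : MeasurableSet s) {f : E → E}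
    {f' : E → E →L[ℝ] E} (hf' : ∀ x ∈ s, HasFDerivWithinAt f (f' x) s x) (hinj : InjOn f s)
    (hdet : ∀ x ∈ s, 0 ≤ (f' x).det) : ∫ x in s, (f' x).det ∂μ = μ.real (f '' s) := by
  have hchange := integral_image_eq_integral_abs_det_fderiv_smul μ hs hf' hinj fun _ => (1 : ℝ)
  rw [setIntegral_const, smul_eq_mul, mul_one] at hchange
  rw [hchange]
  exact setIntegral_congr_fun hs fun x hx => by simp [abs_of_nonneg (hdet x hx)]

lemma eventually_setIntegral_det_eq_measureReal {K : Set E} (hK : IsCompact K) (hconv : Convex ℝ K)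
    {r : E → E} (hr : ContDiff ℝ 1 r) (hmaps : MapsTo r K K) (hfix : ∀ x ∈ frontier K, r x = x) :
    ∀ᶠ t : ℝ in 𝓝[>] 0,
      ∫ x in interior K, (1 + t • (fderiv ℝ r x - 1)).det ∂μ = μ.real (interior K) := by
  have hderiv : ∀ x, HasFDerivAt (fun x => r x - x) (fderiv ℝ r x - 1) x := fun x =>
    (hr.differentiable one_ne_zero x).hasFDerivAt.sub (hasFDerivAt_id x)
  obtain ⟨C, hC⟩ : ∃ C, LipschitzOnWith C (fun x => r x - x) K :=
    (hr.sub contDiff_id).locallyLipschitz.locallyLipschitzOn.exists_lipschitzOnWith_of_compact hK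
  have hdet : ∀ᶠ t : ℝ in 𝓝 0, ∀ x ∈ K, 0 < (1 + t • (fderiv ℝ r x - 1)).det := by
    refine hK.eventually_forall_of_forall_eventually fun x _ => ?_
    exact (continuous_det_one_add_smul_fderiv_sub_one hr).continuousAt.eventually_const_lt
      (by simp [ContinuousLinearMap.det])
  have hsmall : ∀ᶠ t : ℝ in 𝓝 0, t < 1 ∧ t * C < 1 :=
    (eventually_lt_nhds one_pos).and
      ((continuous_mul_const (C : ℝ)).continuousAt.eventually_lt_const (by simp))
  filter_upwards [self_mem_nhdsWithin, nhdsWithin_le_nhds hdet, nhdsWithin_le_nhds hsmall] with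
    t ht hdet_pos ⟨ht1, htC⟩
  lift t to ℝ≥0 using ht.le
  have hbij := bijOn_interior_add_smul_sub hK.isClosed hconv hmaps hfix hC
    (NNReal.coe_lt_one.1 ht1) (by exact_mod_cast htC)
  have hderiv_add : ∀ x, HasFDerivAt (fun x => x + t • (r x - x))
      (1 + (t : ℝ) • (fderiv ℝ r x - 1)) x := fun x =>
    (hasFDerivAt_id x).add ((hderiv x).const_smul (t : ℝ))
  rw [setIntegral_det_eq_measureReal_image μ isOpen_interior.measurableSet
    (fun x _ => (hderiv_add x).hasFDerivWithinAt)
    hbij.injOn fun x hx => (hdet_pos x (interior_subset hx)).le]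
  exact congrArg μ.real hbij.image_eq

theorem setIntegral_det_fderiv_eq_measureReal {K : Set E} (hK : IsCompact K) (hconv : Convex ℝ K)
    {r : E → E} (hr : ContDiff ℝ 1 r) (hmaps : MapsTo r K K) (hfix : ∀ x ∈ frontier K, r x = x) :
    ∫ x in interior K, (fderiv ℝ r x).det ∂μ = μ.real (interior K) := by
  choose p hdeg hp using fun x => exists_polynomial_eval_eq_det_one_add_smul (fderiv ℝ r x - 1)
  have hint : ∀ t : ℝ, Integrable (fun x => (p x).eval t) (μ.restrict (interior K)) := fun t => by
    simp only [hp]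
    refine IntegrableOn.mono_set ?_ interior_subset
    have hcont := (continuous_det_one_add_smul_fderiv_sub_one hr).comp (Continuous.prodMk_right t)
    exact hcont.continuousOn.integrableOn_compact hK
  obtain ⟨q, hq⟩ := exists_polynomial_eval_eq_integral hdeg hint
  have hconst : q = Polynomial.C (μ.real (interior K)) := by
    refine Polynomial.eq_of_infinite_eval_eq _ _ ?_
    have hev := eventually_setIntegral_det_eq_measureReal μ hK hconv hr hmaps hfix
    obtain ⟨ε, hε, hsub⟩ := mem_nhdsGT_iff_exists_Ioo_subset.1 hev
    exact (Ioo_infinite hε).mono fun t ht => by simpa [hq, hp] using hsub ht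
  have hone := hq 1
  rw [hconst] at hone
  simpa [hp] using hone.symm

end Degree

section DimensionTheory

open MeasureTheory Metric Set Topology

variable {E : Type*} [NormedAddCommGroup E] [InnerProductSpace ℝ E] [FiniteDimensional ℝ E]

lemma det_eq_zero_of_eventually_norm_eq {c : ℝ} (hc : c ≠ 0) {r : E → E} {r' : E →L[ℝ] E} {x : E}
    (hr : HasFDerivAt r r' x) (hnorm : ∀ᶠ y in 𝓝 x, ‖r y‖ = c) : r'.det = 0 := by
  by_contra hdet
  obtain ⟨w, hw⟩ := (LinearMap.equivOfDetNeZero (r' : E →ₗ[ℝ] E) hdet).surjective (r x)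
  replace hw : r' w = r x := hw
  have hconst : HasFDerivAt (fun y => inner ℝ (r y) (r y)) (0 : E →L[ℝ] ℝ) x := by
    refine (hasFDerivAt_const (c ^ 2) x).congr_of_eventuallyEq ?_
    filter_upwards [hnorm] with y hy
    rw [real_inner_self_eq_norm_sq, hy]
  have hderiv := DFunLike.congr_fun ((hr.inner ℝ hr).unique hconst) w
  have hrx : r x = 0 := by simpa [hw] using hderiv
  exact hc (by rw [← hnorm.self_of_nhds, hrx, norm_zero])

theorem exists_norm_ne_one_of_fixes_sphere {r : E → E} (hr : ContDiff ℝ 1 r)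
    (hfix : ∀ x ∈ sphere (0 : E) 1, r x = x) : ∃ x ∈ closedBall (0 : E) 1, ‖r x‖ ≠ 1 := by
  by_contra! hnorm
  borelize E
  have hmaps : MapsTo r (closedBall 0 1) (closedBall 0 1) := fun x hx => by simp [hnorm x hx]
  have hdegree := setIntegral_det_fderiv_eq_measureReal (volume : Measure E)
    (isCompact_closedBall 0 1) (convex_closedBall 0 1) hr hmaps
    (by rwa [frontier_closedBall _ one_ne_zero])
  rw [interior_closedBall _ one_ne_zero] at hdegree
  have hdet : ∀ x ∈ ball (0 : E) 1, (fderiv ℝ r x).det = 0 := fun x hx =>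
    det_eq_zero_of_eventually_norm_eq one_ne_zero (hr.differentiable one_ne_zero x).hasFDerivAt <|
      (isOpen_ball.eventually_mem hx).mono fun y hy => hnorm y (ball_subset_closedBall hy)
  rw [setIntegral_congr_fun measurableSet_ball hdet, integral_zero] at hdegree
  exact hdegree.not_lt <|
    ENNReal.toReal_pos (measure_ball_pos volume 0 one_pos).ne' measure_ball_lt_top.ne

lemma exists_eq_zero_of_contDiff_of_norm_sub_lt {h : E → E} (hh : ContDiff ℝ 1 h)
    (hclose : ∀ x ∈ closedBall (0 : E) 1, ‖h x - x‖ < 1 / 2) :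
    ∃ x ∈ closedBall (0 : E) 1, h x = 0 := by
  by_contra! hne
  -- Without zeros, `h` cut off to the identity near the sphere would normalize to a retraction.
  let χ : ContDiffBump (0 : E) := ⟨1 / 2, 1, by norm_num, by norm_num⟩
  let w : E → E := fun x => x + χ x • (h x - x)
  have hw_eq : ∀ x, 1 ≤ ‖x‖ → w x = x := fun x hx => by
    simp [w, χ.zero_of_le_dist (show χ.rOut ≤ dist x 0 by simpa [χ] using hx)]
  have hw_ne : ∀ x, w x ≠ 0 := by
    intro x hx
    rcases le_or_gt 1 ‖x‖ with hout | hin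
    · rw [hw_eq x hout] at hx
      norm_num [hx] at hout
    have hmem : x ∈ closedBall (0 : E) 1 := by simpa using hin.le
    rcases le_or_gt ‖x‖ (1 / 2) with hsmall | hlarge
    · have hone : χ x = 1 := χ.one_of_mem_closedBall (by simpa [χ] using hsmall)
      exact hne x hmem (by simpa [w, hone] using hx)
    · have hx_eq : ‖x‖ = χ x * ‖h x - x‖ := by
        rw [← Real.norm_of_nonneg (χ.nonneg (x := x)), ← norm_smul, ← norm_neg (χ x • _),
          ← eq_neg_of_add_eq_zero_left hx]
      have := mul_le_of_le_one_left (norm_nonneg (h x - x)) (χ.le_one (x := x))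
      linarith [hclose x hmem]
  have hw : ContDiff ℝ 1 w := contDiff_id.add (χ.contDiff.smul (hh.sub contDiff_id))
  obtain ⟨x, -, hx⟩ := exists_norm_ne_one_of_fixes_sphere (r := fun x => ‖w x‖⁻¹ • w x)
    (((hw.norm ℝ hw_ne).inv fun x => norm_ne_zero_iff.2 (hw_ne x)).smul hw) fun x hx => by
      have hx1 : ‖x‖ = 1 := by simpa using hx
      simp [hw_eq x hx1.ge, hx1]
  exact hx (norm_smul_inv_norm (𝕜 := ℝ) (hw_ne x))

theorem exists_eq_zero_of_norm_sub_le {h : E → E} (hh : Continuous h)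
    (hclose : ∀ x ∈ closedBall (0 : E) 1, ‖h x - x‖ ≤ 1 / 4) :
    ∃ x ∈ closedBall (0 : E) 1, h x = 0 := by
  obtain ⟨z, hz, hmin⟩ := (isCompact_closedBall (0 : E) 1).exists_isMinOn ⟨0, by simp⟩
    hh.norm.continuousOn
  by_contra! hne
  have hpos : 0 < min ‖h z‖ (1 / 4) := lt_min (norm_pos_iff.2 (hne z hz)) (by norm_num)
  obtain ⟨P, hP, hPh, -⟩ := hh.exists_contDiff_approx 1 (ε := fun _ => min ‖h z‖ (1 / 4))
    continuous_const fun _ => hpos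
  simp only [dist_eq_norm] at hPh
  obtain ⟨x, hx, hPx⟩ := exists_eq_zero_of_contDiff_of_norm_sub_lt hP fun x hx => by
    calc ‖P x - x‖ ≤ ‖P x - h x‖ + ‖h x - x‖ := norm_sub_le_norm_sub_add_norm_sub ..
      _ < 1 / 4 + 1 / 4 :=
        add_lt_add_of_lt_of_le ((hPh x).trans_le (min_le_right _ _)) (hclose x hx)
      _ = 1 / 2 := by norm_num
  have hlt := (hPh x).trans_le (min_le_left _ _)
  rw [hPx, zero_sub, norm_neg] at hlt
  exact hlt.not_ge (hmin hx)

variable {F : Type*} [NormedAddCommGroup F] [NormedSpace ℝ F] [FiniteDimensional ℝ F]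

theorem finrank_le_of_injective_closedBall {f : closedBall (0 : E) 1 → F} (hf : Continuous f)
    (hinj : Function.Injective f) : Module.finrank ℝ E ≤ Module.finrank ℝ F := by
  by_contra! hdim
  have := isCompact_iff_compactSpace.1 (isCompact_closedBall (0 : E) 1)
  obtain ⟨G, hG⟩ := ContinuousMap.exists_extension (hf.isClosedEmbedding hinj)
    (⟨Subtype.val, continuous_subtype_val⟩ : C(closedBall (0 : E) 1, E))
  obtain ⟨f₁, hf₁⟩ := ContinuousMap.exists_extension
    (isClosed_closedBall (x := (0 : E)) (ε := 1)).isClosedEmbedding_subtypeVal ⟨f, hf⟩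
  have hleft : ∀ x ∈ closedBall (0 : E) 1, G (f₁ x) = x := fun x hx => by
    rw [show f₁ x = f ⟨x, hx⟩ from DFunLike.congr_fun hf₁ ⟨x, hx⟩]
    exact DFunLike.congr_fun hG ⟨x, hx⟩
  obtain ⟨P, hP, hPG, -⟩ := G.continuous.exists_contDiff_approx 1 (ε := fun _ => 1 / 8)
    continuous_const (by norm_num)
  obtain ⟨c, hc, hc_small⟩ :=
    (hP.dense_compl_range_of_finrank_lt_finrank hdim).exists_dist_lt 0 (ε := 1 / 8) (by norm_num)
  rw [dist_zero_left] at hc_small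
  obtain ⟨x, -, hx⟩ := exists_eq_zero_of_norm_sub_le
    ((hP.continuous.comp f₁.continuous).sub (continuous_const (y := c))) fun x hx => by
      have hPx := hPG (f₁ x)
      rw [hleft x hx, dist_eq_norm] at hPx
      calc ‖P (f₁ x) - c - x‖ = ‖P (f₁ x) - x - c‖ := by rw [sub_right_comm]
        _ ≤ 1 / 8 + 1 / 8 := (norm_sub_le _ _).trans (add_le_add hPx.le hc_small.le)
        _ = 1 / 4 := by norm_num
  exact hc ⟨f₁ x, sub_eq_zero.1 hx⟩

theorem le_finrank_of_homeomorph_closedBall {X : Type*} [TopologicalSpace X] {d : ℕ}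
    (φ : X ≃ₜ closedBall (0 : EuclideanSpace ℝ (Fin d)) 1) {O : Set X} (hO : IsOpen O)
    (hne : O.Nonempty) {f : X → F} (hf : ContinuousOn f O) (hinj : InjOn f O) :
    d ≤ Module.finrank ℝ F := by
  obtain ⟨x₀, hx₀⟩ := hne
  obtain ⟨ε, hε, hball⟩ := Metric.isOpen_iff.1 (hO.preimage φ.symm.continuous) (φ x₀) (by simpa)
  obtain ⟨t, ht, ht_lt⟩ := exists_between (lt_min one_pos (half_pos hε))
  obtain ⟨ht_one, ht_half⟩ := lt_min_iff.1 ht_lt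
  let shrink : closedBall (0 : EuclideanSpace ℝ (Fin d)) 1 →
      closedBall (0 : EuclideanSpace ℝ (Fin d)) 1 := fun x =>
    ⟨AffineMap.lineMap (φ x₀ : EuclideanSpace ℝ (Fin d)) x t,
      (convex_closedBall _ _).lineMap_mem (φ x₀).2 x.2 ⟨ht.le, ht_one.le⟩⟩
  have hshrink : Continuous shrink := by
    refine Continuous.subtype_mk ?_ _
    simp only [AffineMap.lineMap_apply_module]
    fun_prop
  have hshrink_inj : Function.Injective shrink := fun x y hxy => by
    simpa [shrink, AffineMap.lineMap_apply, ht.ne', Subtype.ext_iff] using hxy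
  have hmem : ∀ x, φ.symm (shrink x) ∈ O := fun x => hball <| by
    have hdiam : dist (φ x₀ : EuclideanSpace ℝ (Fin d)) x ≤ 1 + 1 :=
      (dist_triangle_right _ _ 0).trans (add_le_add (φ x₀).2 x.2)
    rw [mem_ball, Subtype.dist_eq, dist_lineMap_left, Real.norm_of_nonneg ht.le]
    nlinarith
  simpa using finrank_le_of_injective_closedBall
    (hf.comp_continuous (φ.symm.continuous.comp hshrink) hmem)
    fun x y hxy => hshrink_inj (φ.symm.injective (hinj (hmem x) (hmem y) hxy))

end DimensionTheory

section Pure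

open Metric

lemma nonempty_stdSimplex_homeomorph_convexHull {ι E : Type*} [Fintype ι] [NormedAddCommGroup E]
    [NormedSpace ℝ E] [FiniteDimensional ℝ E] (b : AffineBasis ι ℝ E) :
    Nonempty (stdSimplex ℝ ι ≃ₜ convexHull ℝ (Set.range b)) := by
  have hhull : convexHull ℝ (Set.range b) = {x | ∀ i, 0 ≤ b.coord i x} :=
    b.convexHull_eq_nonneg_coord
  have := isCompact_iff_compactSpace.1 ((Set.finite_range b).isCompact_convexHull (𝕜 := ℝ))
  let coords : convexHull ℝ (Set.range b) → stdSimplex ℝ ι := fun x =>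
    ⟨fun i => b.coord i x, hhull.subset x.2, b.sum_coord_apply_eq_one _⟩
  have hcont : Continuous coords := Continuous.subtype_mk (continuous_pi fun i =>
    (b.coord i).continuous_of_finiteDimensional.comp continuous_subtype_val) _
  have hbij : Function.Bijective coords := by
    refine ⟨fun x y hxy => Subtype.ext <| b.ext_elem fun i => ?_, fun w => ?_⟩
    · exact congrFun (congrArg Subtype.val hxy) i
    · have hcoord (i : ι) : b.coord i (univ.affineCombination ℝ b w) = w i :=
        b.coord_apply_combination_of_mem (mem_univ i) w.2.2
      exact ⟨⟨univ.affineCombination ℝ b w, hhull.superset fun i => (hcoord i).ge.trans' (w.2.1 i)⟩,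
        Subtype.ext (funext hcoord)⟩
  exact ⟨(hcont.homeoOfEquivCompactToT2 (f := Equiv.ofBijective coords hbij)).symm⟩

theorem nonempty_stdSimplex_homeomorph_closedBall {ι : Type*} [Fintype ι] {d : ℕ}
    (hι : Fintype.card ι = d + 1) :
    Nonempty (stdSimplex ℝ ι ≃ₜ closedBall (0 : EuclideanSpace ℝ (Fin d)) 1) := by
  obtain ⟨b⟩ := AffineBasis.exists_affineBasis_of_finiteDimensional (k := ℝ)
    (P := EuclideanSpace ℝ (Fin d)) (ι := ι) (by simpa using hι)
  have hcompact : IsCompact (convexHull ℝ (Set.range b)) :=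
    (Set.finite_range b).isCompact_convexHull (𝕜 := ℝ)
  obtain ⟨h, -, himage, -⟩ := exists_homeomorph_image_interior_closure_frontier_eq_unitBall
    (convex_convexHull ℝ (Set.range b)) ⟨_, b.centroid_mem_interior_convexHull⟩ hcompact.isBounded
  rw [hcompact.isClosed.closure_eq] at himage
  obtain ⟨φ⟩ := nonempty_stdSimplex_homeomorph_convexHull b
  exact ⟨φ.trans ((h.image _).trans (Homeomorph.setCongr himage))⟩

/-- A pure `d`-dimensional complex: every face lies in a face of dimension `d`, the largest
possible one. The dimension of a face is one less than its cardinality. -/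
structure IsPure {V : Type*} (Δ : Set (Finset V)) (d : ℕ) : Prop where
  card_le : ∀ F ∈ Δ, F.card ≤ d + 1
  exists_facet : ∀ F ∈ Δ, ∃ H ∈ Δ, F ⊆ H ∧ H.card = d + 1

variable {V : Type*} [Fintype V] {Δ : Set (Finset V)} {F : Finset V} {d : ℕ}

lemma sum_extend_val (f : F → ℝ) : ∑ v, Function.extend Subtype.val f 0 v = ∑ v, f v := by
  rw [sum_eq_sum_extend, ← sum_subset (subset_univ F) fun v _ hv => ?_]
  exact Function.extend_apply' _ _ _ (by simpa using hv)

/-- The inclusion of the geometric simplex spanned by a face into the realization, in barycentric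
coordinates. -/
noncomputable def faceInclusion (hF : F ∈ Δ) (f : stdSimplex ℝ F) : realization Δ :=
  ⟨Function.extend Subtype.val f.1 0, Function.extend_nonneg (Pi.le_def.2 f.2.1) le_rfl,
    (sum_extend_val f.1).trans f.2.2, F, hF, fun v hv => by
      by_contra hvF
      exact hv (Function.extend_apply' _ _ _ (by simpa using hvF))⟩

lemma faceInclusion_apply (hF : F ∈ Δ) (f : stdSimplex ℝ F) (v : F) :
    (faceInclusion hF f).1 v = f v :=
  Subtype.val_injective.extend_apply f.1 0 v

lemma continuous_faceInclusion (hF : F ∈ Δ) : Continuous (faceInclusion hF) := by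
  refine Continuous.subtype_mk (continuous_pi fun v => ?_) _
  by_cases hv : v ∈ F
  · have heval : Continuous fun f : stdSimplex ℝ F => f.1 ⟨v, hv⟩ :=
      (continuous_apply _).comp continuous_subtype_val
    exact heval.congr fun f => (faceInclusion_apply hF f ⟨v, hv⟩).symm
  · have hv' : ¬∃ u : F, u.1 = v := by simpa using hv
    simpa only [Function.extend_apply' _ _ _ hv'] using continuous_const

lemma injective_faceInclusion (hF : F ∈ Δ) : Function.Injective (faceInclusion hF) :=
  fun _ _ h => Subtype.ext <|
    Function.extend_injective Subtype.val_injective (0 : V → ℝ) (congrArg Subtype.val h)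

lemma card_le_of_mem_of_isTriangulatedBall (h : IsTriangulatedBall Δ d) (hF : F ∈ Δ) :
    F.card ≤ d + 1 := by
  obtain ⟨-, ⟨φ⟩⟩ := h
  rcases F.eq_empty_or_nonempty with rfl | hne
  · simp
  obtain ⟨e, he⟩ := Nat.exists_eq_add_one_of_ne_zero (card_ne_zero.2 hne)
  obtain ⟨ψ⟩ := nonempty_stdSimplex_homeomorph_closedBall (ι := F) (by simpa using he)
  have hle : e ≤ Module.finrank ℝ (EuclideanSpace ℝ (Fin d)) :=
    le_finrank_of_homeomorph_closedBall ψ isOpen_univ ⟨ψ.symm ⟨0, by simp⟩, trivial⟩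
      (f := fun f => (φ (faceInclusion hF f) : EuclideanSpace ℝ (Fin d)))
      (continuous_subtype_val.comp (φ.continuous.comp (continuous_faceInclusion hF))).continuousOn
      (Subtype.val_injective.comp (φ.injective.comp (injective_faceInclusion hF))).injOn
  rw [finrank_euclideanSpace_fin] at hle
  omega

lemma eq_zero_of_notMem_of_maximal (hF : Maximal (· ∈ Δ) F) {f : V → ℝ} (hf : f ∈ realization Δ)
    (hpos : ∀ v ∈ F, 0 < f v) {v : V} (hv : v ∉ F) : f v = 0 := by
  obtain ⟨-, -, G, hG, hfG⟩ := hf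
  by_contra hfv
  exact hv (hF.le_of_ge hG (fun u hu => hfG u (hpos u hu).ne') (hfG v hfv))

lemma nonempty_of_maximal_of_mem_realization (hF : Maximal (· ∈ Δ) F) {f : V → ℝ}
    (hf : f ∈ realization Δ) : F.Nonempty := by
  by_contra hempty
  rw [not_nonempty_iff_eq_empty] at hempty
  have hzero : ∀ v, f v = 0 := fun v =>
    eq_zero_of_notMem_of_maximal hF hf (by simp [hempty]) (by simp [hempty])
  simpa [hzero] using hf.2.1

lemma le_card_of_maximal_of_isTriangulatedBall (h : IsTriangulatedBall Δ d)
    (hF : Maximal (· ∈ Δ) F) : d + 1 ≤ F.card := by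
  classical
  obtain ⟨-, ⟨φ⟩⟩ := h
  obtain ⟨v₀, hv₀⟩ := nonempty_of_maximal_of_mem_realization hF (φ.symm ⟨0, by simp⟩).2
  have : Nonempty F := ⟨⟨v₀, hv₀⟩⟩
  let O : Set (realization Δ) := {f | ∀ v ∈ F, 0 < f.1 v}
  have hO : IsOpen O := by
    simp only [O, Set.ofPred_forall]
    exact isOpen_biInter_finset fun v _ =>
      isOpen_lt continuous_const ((continuous_apply v).comp continuous_subtype_val)
  have hO_ne : O.Nonempty := ⟨faceInclusion hF.prop stdSimplex.barycenter, fun v hv => by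
    have : 0 < F.card := card_pos.2 ⟨v, hv⟩
    rw [faceInclusion_apply hF.prop _ ⟨v, hv⟩]
    change 0 < (Fintype.card F : ℝ)⁻¹
    simpa⟩
  let coords : realization Δ → F.erase v₀ → ℝ := fun f v => f.1 v
  have hcoords : Continuous coords :=
    continuous_pi fun v => (continuous_apply v.1).comp continuous_subtype_val
  have hinj : Set.InjOn coords O := by
    intro f hf g hg hfg
    have hne : ∀ v ≠ v₀, f.1 v = g.1 v := fun v hv => by
      by_cases hvF : v ∈ F
      · exact congrFun hfg ⟨v, mem_erase.2 ⟨hv, hvF⟩⟩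
      · rw [eq_zero_of_notMem_of_maximal hF f.2 hf hvF, eq_zero_of_notMem_of_maximal hF g.2 hg hvF]
    have hv₀_eq : f.1 v₀ = g.1 v₀ := by
      have hsum := f.2.2.1.trans g.2.2.1.symm
      rw [← add_sum_erase _ _ (mem_univ v₀), ← add_sum_erase _ _ (mem_univ v₀),
        sum_congr rfl fun v hv => hne v (ne_of_mem_erase hv)] at hsum
      exact add_right_cancel hsum
    exact Subtype.ext <| funext fun v => (eq_or_ne v v₀).elim (· ▸ hv₀_eq) (hne v)
  have hle := le_finrank_of_homeomorph_closedBall φ hO hO_ne hcoords.continuousOn hinj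
  rw [Module.finrank_fintype_fun_eq_card, Fintype.card_coe, card_erase_of_mem hv₀] at hle
  have := card_pos.2 ⟨v₀, hv₀⟩
  omega

theorem IsTriangulatedBall.isPure (h : IsTriangulatedBall Δ d) : IsPure Δ d where
  card_le _ hF := card_le_of_mem_of_isTriangulatedBall h hF
  exists_facet F hF := by
    obtain ⟨H, hFH, hH⟩ := (Set.toFinite Δ).exists_le_maximal hF
    exact ⟨H, hH.prop, hFH, le_antisymm (card_le_of_mem_of_isTriangulatedBall h hH.prop)
      (le_card_of_maximal_of_isTriangulatedBall h hH)⟩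

end Pure

section Cone

variable {V V' : Type*} {A' : Set (Finset V')} {A : Set (Finset V)}

/-- The cone with apex the origin over the realization of a complex: the points of the realization
are those whose coordinates sum to one. -/
def cone (A : Set (Finset V)) : Set (V → ℝ) :=
  {x | (∀ v, 0 ≤ x v) ∧ ∃ F ∈ A, ∀ v, x v ≠ 0 → v ∈ F}

lemma smul_mem_cone {x : V → ℝ} (hx : x ∈ cone A) {c : ℝ} (hc : 0 ≤ c) : c • x ∈ cone A := by
  obtain ⟨hx₀, F, hF, hxF⟩ := hx
  exact ⟨fun v => mul_nonneg hc (hx₀ v), F, hF, fun v hv => hxF v (right_ne_zero_of_mul hv)⟩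

variable [Fintype V]

/-- The extension of a map between realizations to the cones over them, homogeneous of degree one.
It sends the apex to the apex, whatever `Φ` is. -/
noncomputable def coneMap (Φ : (V → ℝ) → V' → ℝ) (x : V → ℝ) : V' → ℝ :=
  (∑ v, x v) • Φ ((∑ v, x v)⁻¹ • x)

lemma mem_realization_iff {x : V → ℝ} : x ∈ realization A ↔ x ∈ cone A ∧ ∑ v, x v = 1 :=
  ⟨fun h => ⟨⟨h.1, h.2.2⟩, h.2.1⟩, fun h => ⟨h.1.1, h.2, h.1.2⟩⟩

lemma sum_nonneg_of_mem_cone {x : V → ℝ} (hx : x ∈ cone A) : 0 ≤ ∑ v, x v :=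
  sum_nonneg fun v _ => hx.1 v

lemma inv_sum_smul_mem_realization {x : V → ℝ} (hx : x ∈ cone A) (hsum : ∑ v, x v ≠ 0) :
    (∑ v, x v)⁻¹ • x ∈ realization A := by
  refine mem_realization_iff.2 ⟨smul_mem_cone hx (inv_nonneg.2 (sum_nonneg_of_mem_cone hx)), ?_⟩
  simp only [Pi.smul_apply, smul_eq_mul, ← mul_sum, inv_mul_cancel₀ hsum]

lemma eq_zero_of_mem_cone_of_sum_eq_zero {x : V → ℝ} (hx : x ∈ cone A) (hsum : ∑ v, x v = 0) :
    x = 0 :=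
  funext fun v => (sum_eq_zero_iff_of_nonneg fun v _ => hx.1 v).1 hsum v (mem_univ v)

lemma coneMap_of_sum_eq_zero (Φ : (V → ℝ) → V' → ℝ) {x : V → ℝ} (hsum : ∑ v, x v = 0) :
    coneMap Φ x = 0 := by
  rw [coneMap, hsum, zero_smul]

section MapsTo

variable [Fintype V'] {Φ : (V → ℝ) → V' → ℝ} (hΦ : Set.MapsTo Φ (realization A) (realization A'))

include hΦ

lemma coneMap_mem_cone (hA' : ∅ ∈ A') {x : V → ℝ} (hx : x ∈ cone A) : coneMap Φ x ∈ cone A' := by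
  by_cases hsum : ∑ v, x v = 0
  · rw [coneMap_of_sum_eq_zero Φ hsum]
    exact ⟨fun _ => le_rfl, ∅, hA', fun _ hv => (hv rfl).elim⟩
  · have hΦx := mem_realization_iff.1 (hΦ (inv_sum_smul_mem_realization hx hsum))
    exact smul_mem_cone hΦx.1 (sum_nonneg_of_mem_cone hx)

lemma sum_coneMap {x : V → ℝ} (hx : x ∈ cone A) : ∑ v, coneMap Φ x v = ∑ v, x v := by
  by_cases hsum : ∑ v, x v = 0
  · simp [coneMap_of_sum_eq_zero Φ hsum, hsum]
  · have hΦx := mem_realization_iff.1 (hΦ (inv_sum_smul_mem_realization hx hsum))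
    simp only [coneMap, Pi.smul_apply, smul_eq_mul, ← mul_sum, hΦx.2, mul_one]

lemma coneMap_coneMap {Ψ : (V' → ℝ) → V → ℝ} (hinv : Set.LeftInvOn Ψ Φ (realization A))
    {x : V → ℝ} (hx : x ∈ cone A) : coneMap Ψ (coneMap Φ x) = x := by
  rw [coneMap, sum_coneMap hΦ hx]
  by_cases hsum : ∑ v, x v = 0
  · rw [hsum, zero_smul, eq_zero_of_mem_cone_of_sum_eq_zero hx hsum]
  · rw [coneMap, inv_smul_smul₀ hsum, hinv (inv_sum_smul_mem_realization hx hsum),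
      smul_inv_smul₀ hsum]

lemma norm_coneMap_le (hA' : ∅ ∈ A') {x : V → ℝ} (hx : x ∈ cone A) :
    ‖coneMap Φ x‖ ≤ ∑ v, x v := by
  have hpos := (coneMap_mem_cone hΦ hA' hx).1
  refine (pi_norm_le_iff_of_nonneg (sum_nonneg_of_mem_cone hx)).2 fun v => ?_
  rw [Real.norm_of_nonneg (hpos v), ← sum_coneMap hΦ hx]
  exact single_le_sum (fun u _ => hpos u) (mem_univ v)

lemma continuousOn_coneMap (hA' : ∅ ∈ A') (hcont : ContinuousOn Φ (realization A)) :
    ContinuousOn (coneMap Φ) (cone A) := by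
  have hsum_cont : Continuous fun x : V → ℝ => ∑ v, x v := by fun_prop
  intro x hx
  by_cases hsum : ∑ v, x v = 0
  · have hlim : Filter.Tendsto (fun y : V → ℝ => ∑ v, y v) (nhdsWithin x (cone A)) (nhds 0) :=
      hsum ▸ hsum_cont.continuousWithinAt
    rw [ContinuousWithinAt, coneMap_of_sum_eq_zero Φ hsum]
    exact squeeze_zero_norm'
      (eventually_nhdsWithin_of_forall fun y hy => norm_coneMap_le hΦ hA' hy) hlim
  · have hopen : {y : V → ℝ | ∑ v, y v ≠ 0} ∈ nhds x :=
      (isOpen_ne_fun hsum_cont continuous_const).mem_nhds hsum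
    rw [← continuousWithinAt_inter hopen]
    have hnormalize : ContinuousWithinAt (fun y : V → ℝ => (∑ v, y v)⁻¹ • y)
        (cone A ∩ {y | ∑ v, y v ≠ 0}) x :=
      (hsum_cont.continuousWithinAt.inv₀ hsum).smul continuousWithinAt_id
    exact hsum_cont.continuousWithinAt.smul <| ContinuousWithinAt.comp (g := Φ)
      (hcont _ (inv_sum_smul_mem_realization hx hsum)) hnormalize
      fun y hy => inv_sum_smul_mem_realization hy.1 hy.2

end MapsTo

theorem exists_homeomorph_cone_sum_eq [Fintype V'] (hA : ∅ ∈ A) (hA' : ∅ ∈ A')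
    (φ : realization A ≃ₜ realization A') :
    ∃ e : cone A ≃ₜ cone A', ∀ x, ∑ v, (e x).1 v = ∑ v, x.1 v := by
  let Φ : (V → ℝ) → V' → ℝ := Function.extend Subtype.val (fun x => (φ x).1) 0
  let Ψ : (V' → ℝ) → V → ℝ := Function.extend Subtype.val (fun x => (φ.symm x).1) 0
  have hΦ_apply (x : realization A) : Φ x = φ x := Subtype.val_injective.extend_apply _ _ x
  have hΨ_apply (x : realization A') : Ψ x = φ.symm x := Subtype.val_injective.extend_apply _ _ x
  have hΦ : Set.MapsTo Φ (realization A) (realization A') :=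
    fun x hx => hΦ_apply ⟨x, hx⟩ ▸ (φ _).2
  have hΨ : Set.MapsTo Ψ (realization A') (realization A) :=
    fun x hx => hΨ_apply ⟨x, hx⟩ ▸ (φ.symm _).2
  have hΦ_cont : ContinuousOn Φ (realization A) := continuousOn_iff_continuous_domRestrict.2 <|
    (continuous_subtype_val.comp φ.continuous).congr fun x => (hΦ_apply x).symm
  have hΨ_cont : ContinuousOn Ψ (realization A') := continuousOn_iff_continuous_domRestrict.2 <|
    (continuous_subtype_val.comp φ.symm.continuous).congr fun x => (hΨ_apply x).symm
  have hΨΦ : Set.LeftInvOn Ψ Φ (realization A) := fun x hx => by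
    rw [hΦ_apply ⟨x, hx⟩, hΨ_apply, φ.symm_apply_apply]
  have hΦΨ : Set.LeftInvOn Φ Ψ (realization A') := fun x hx => by
    rw [hΨ_apply ⟨x, hx⟩, hΦ_apply, φ.apply_symm_apply]
  exact ⟨{
    toFun := fun x => ⟨coneMap Φ x, coneMap_mem_cone hΦ hA' x.2⟩
    invFun := fun x => ⟨coneMap Ψ x, coneMap_mem_cone hΨ hA x.2⟩
    left_inv := fun x => Subtype.ext (coneMap_coneMap hΦ hΨΦ x.2)
    right_inv := fun x => Subtype.ext (coneMap_coneMap hΨ hΦΨ x.2)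
    continuous_toFun := Continuous.subtype_mk
      (continuousOn_iff_continuous_domRestrict.1 (continuousOn_coneMap hΦ hA' hΦ_cont)) _
    continuous_invFun := Continuous.subtype_mk
      (continuousOn_iff_continuous_domRestrict.1 (continuousOn_coneMap hΨ hA hΨ_cont)) _ },
    fun x => sum_coneMap hΦ x.2⟩

end Cone

section Join

variable {V V' W W' : Type*} [DecidableEq V] [DecidableEq V'] [DecidableEq W] [DecidableEq W']
  {A : Set (Finset V)} {A' : Set (Finset V')} {B : Set (Finset W)} {B' : Set (Finset W')}
  {d e : ℕ}

lemma mem_simplicialJoin {H : Finset (V ⊕ W)} :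
    H ∈ simplicialJoin A B ↔ H.toLeft ∈ A ∧ H.toRight ∈ B := by
  have union_eq (F : Finset V) (G : Finset W) :
      F.map ⟨Sum.inl, Sum.inl_injective⟩ ∪ G.map ⟨Sum.inr, Sum.inr_injective⟩ = F.disjSum G := by
    ext x
    simp [mem_disjSum]
  constructor
  · rintro ⟨F, hF, G, hG, rfl⟩
    simpa only [union_eq, toLeft_disjSum, toRight_disjSum] using And.intro hF hG
  · exact fun h => ⟨_, h.1, _, h.2, by rw [union_eq, toLeft_disjSum_toRight]⟩

lemma IsComplex.join (hA : IsComplex A) (hB : IsComplex B) : IsComplex (simplicialJoin A B) :=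
  fun F hF G hGF => by
    rw [mem_simplicialJoin] at hF ⊢
    exact ⟨hA _ hF.1 _ (toLeft_subset_toLeft hGF), hB _ hF.2 _ (toRight_subset_toRight hGF)⟩

lemma simplicialJoin_univ :
    simplicialJoin (Set.univ : Set (Finset V)) (Set.univ : Set (Finset W)) = Set.univ := by
  ext H
  simp [mem_simplicialJoin]

variable [Fintype V] [Fintype V'] [Fintype W] [Fintype W']

lemma mem_realization_simplicialJoin {f : V ⊕ W → ℝ} :
    f ∈ realization (simplicialJoin A B) ↔
      f ∘ Sum.inl ∈ cone A ∧ f ∘ Sum.inr ∈ cone B ∧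
        ∑ v, f (Sum.inl v) + ∑ w, f (Sum.inr w) = 1 := by
  constructor
  · rintro ⟨hpos, hsum, H, hH, hfH⟩
    rw [mem_simplicialJoin] at hH
    exact ⟨⟨fun v => hpos _, _, hH.1, fun v hv => mem_toLeft.2 (hfH _ hv)⟩,
      ⟨fun w => hpos _, _, hH.2, fun w hw => mem_toRight.2 (hfH _ hw)⟩,
      (Fintype.sum_sum_type f).symm.trans hsum⟩
  · rintro ⟨⟨hposA, F, hF, hfF⟩, ⟨hposB, G, hG, hfG⟩, hsum⟩
    refine ⟨Sum.rec hposA hposB, (Fintype.sum_sum_type f).trans hsum, F.disjSum G,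
      mem_simplicialJoin.2 (by simpa using And.intro hF hG), ?_⟩
    exact Sum.rec (fun v hv => inl_mem_disjSum.2 (hfF v hv))
      fun w hw => inr_mem_disjSum.2 (hfG w hw)

/-- A point of a join is a pair of points in the cones over the two complexes, of total mass
one. -/
def realizationJoinHomeomorph (A : Set (Finset V)) (B : Set (Finset W)) :
    realization (simplicialJoin A B) ≃ₜ
      {p : cone A × cone B // ∑ v, p.1.1 v + ∑ w, p.2.1 w = 1} where
  toFun f := ⟨(⟨f.1 ∘ Sum.inl, (mem_realization_simplicialJoin.1 f.2).1⟩,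
    ⟨f.1 ∘ Sum.inr, (mem_realization_simplicialJoin.1 f.2).2.1⟩),
    (mem_realization_simplicialJoin.1 f.2).2.2⟩
  invFun p := ⟨Sum.elim p.1.1.1 p.1.2.1,
    mem_realization_simplicialJoin.2 ⟨p.1.1.2, p.1.2.2, p.2⟩⟩
  left_inv f := Subtype.ext (Sum.elim_comp_inl_inr f.1)
  right_inv _ := rfl
  continuous_toFun := Continuous.subtype_mk
    ((Continuous.subtype_mk ((Pi.continuous_precomp _).comp continuous_subtype_val) _).prodMk
      (Continuous.subtype_mk ((Pi.continuous_precomp _).comp continuous_subtype_val) _)) _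
  continuous_invFun := Continuous.subtype_mk (continuous_pi <| Sum.rec
    (fun v => (continuous_apply v).comp (by fun_prop))
    fun w => (continuous_apply w).comp (by fun_prop)) _

lemma nonempty_homeomorph_realization_simplicialJoin (hA : ∅ ∈ A) (hA' : ∅ ∈ A') (hB : ∅ ∈ B)
    (hB' : ∅ ∈ B') (φ : realization A ≃ₜ realization A') (ψ : realization B ≃ₜ realization B') :
    Nonempty (realization (simplicialJoin A B) ≃ₜ realization (simplicialJoin A' B')) := by
  obtain ⟨eA, heA⟩ := exists_homeomorph_cone_sum_eq hA hA' φ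
  obtain ⟨eB, heB⟩ := exists_homeomorph_cone_sum_eq hB hB' ψ
  exact ⟨(realizationJoinHomeomorph A B).trans <|
    ((eA.prodCongr eB).subtype fun p => by simp [heA, heB]).trans
      (realizationJoinHomeomorph A' B').symm⟩

omit [DecidableEq V] in
lemma realization_univ : realization (Set.univ : Set (Finset V)) = stdSimplex ℝ V :=
  Set.ext fun _ => ⟨fun h => ⟨h.1, h.2.1⟩,
    fun h => ⟨h.1, h.2, univ, trivial, fun _ _ => mem_univ _⟩⟩

omit [DecidableEq V] in
lemma isTriangulatedBall_univ (hV : Fintype.card V = d + 1) :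
    IsTriangulatedBall (Set.univ : Set (Finset V)) d :=
  ⟨fun _ _ _ _ => trivial, by
    rw [realization_univ]
    exact nonempty_stdSimplex_homeomorph_closedBall hV⟩

omit [DecidableEq V] in
lemma IsTriangulatedBall.empty_mem (hA : IsTriangulatedBall A d) : ∅ ∈ A := by
  obtain ⟨hcomplex, ⟨φ⟩⟩ := hA
  obtain ⟨-, -, F, hF, -⟩ := (φ.symm ⟨0, by simp⟩).2
  exact hcomplex F hF ∅ (empty_subset F)

theorem IsTriangulatedBall.join (hA : IsTriangulatedBall A d) (hB : IsTriangulatedBall B e) :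
    IsTriangulatedBall (simplicialJoin A B) (d + e + 1) := by
  have hsimplexA : IsTriangulatedBall (Set.univ : Set (Finset (Fin (d + 1)))) d :=
    isTriangulatedBall_univ (by simp)
  have hsimplexB : IsTriangulatedBall (Set.univ : Set (Finset (Fin (e + 1)))) e :=
    isTriangulatedBall_univ (by simp)
  have hsimplex : IsTriangulatedBall
      (Set.univ : Set (Finset (Fin (d + 1) ⊕ Fin (e + 1)))) (d + e + 1) :=
    isTriangulatedBall_univ (by simp; omega)
  rw [← simplicialJoin_univ] at hsimplex
  obtain ⟨φ⟩ := hA.2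
  obtain ⟨φ'⟩ := hsimplexA.2
  obtain ⟨ψ⟩ := hB.2
  obtain ⟨ψ'⟩ := hsimplexB.2
  obtain ⟨χ⟩ := hsimplex.2
  obtain ⟨h⟩ := nonempty_homeomorph_realization_simplicialJoin hA.empty_mem
    hsimplexA.empty_mem hB.empty_mem hsimplexB.empty_mem (φ.trans φ'.symm) (ψ.trans ψ'.symm)
  exact ⟨hA.1.join hB.1, ⟨h.trans χ⟩⟩

end Join

section JoinSimplex

variable {V W : Type*} [DecidableEq V] [DecidableEq W] {B : Set (Finset V)} {d : ℕ}

/-- The join of a complex with the full simplex on `W`. -/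
abbrev joinSimplex (B : Set (Finset V)) (W : Type*) [DecidableEq W] : Set (Finset (V ⊕ W)) :=
  simplicialJoin B (Set.univ : Set (Finset W))

lemma mem_joinSimplex {H : Finset (V ⊕ W)} : H ∈ joinSimplex B W ↔ H.toLeft ∈ B := by
  simp [mem_simplicialJoin]

lemma disjSum_mem_joinSimplex {F : Finset V} (hF : F ∈ B) (G : Finset W) :
    F.disjSum G ∈ joinSimplex B W := by
  rwa [mem_joinSimplex, toLeft_disjSum]

omit [DecidableEq V] in
lemma mem_ballBoundary_of_subset {F F' : Finset V} (hF' : F' ∈ ballBoundary B d) (h : F ⊆ F') :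
    F ∈ ballBoundary B d := by
  obtain ⟨G, hG, hF'G, hG_facet⟩ := hF'
  exact ⟨G, hG, h.trans hF'G, hG_facet⟩

omit [DecidableEq V] in
lemma two_le_card_of_notMem_ballBoundary (hB : IsComplex B) (hpure : IsPure B d)
    (hvert : ∀ F ∈ B, F.card = 1 → F ∈ ballBoundary B d) {F : Finset V} (hF : F ∈ B)
    (hF_int : F ∉ ballBoundary B d) : 2 ≤ F.card := by
  by_contra! hcard
  obtain ⟨H, hH, hFH, hHcard⟩ := hpure.exists_facet F hF
  obtain ⟨E, hFE, hEH, hEcard⟩ := exists_subsuperset_card_eq hFH (Nat.le_of_lt_succ hcard)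
    (by omega : 1 ≤ H.card)
  exact hF_int (mem_ballBoundary_of_subset (hvert E (hB H hH E hEH) hEcard) hFE)

variable [Fintype W]

lemma mem_joinSimplex_and_card_eq_iff (hpure : IsPure B d) {H : Finset (V ⊕ W)} :
    H ∈ joinSimplex B W ∧ H.card = d + Fintype.card W + 1 ↔
      ∃ F ∈ B, F.card = d + 1 ∧ F.disjSum univ = H := by
  constructor
  · rintro ⟨hH, hcard⟩
    rw [mem_joinSimplex] at hH
    have hleft := hpure.card_le _ hH
    have hright := card_le_univ H.toRight
    rw [← card_toLeft_add_card_toRight] at hcard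
    refine ⟨H.toLeft, hH, by omega, ?_⟩
    rw [← eq_univ_of_card H.toRight (by omega), toLeft_disjSum_toRight]
  · rintro ⟨F, hF, hFcard, rfl⟩
    refine ⟨disjSum_mem_joinSimplex hF univ, ?_⟩
    rw [card_disjSum, hFcard, card_univ]
    omega

lemma disjSum_univ_mem_ballBoundary (hpure : IsPure B d) {F : Finset V}
    (hF : F ∈ ballBoundary B d) :
    F.disjSum univ ∈ ballBoundary (joinSimplex B W) (d + Fintype.card W) := by
  obtain ⟨G, hG, hFG, hGcard, H, ⟨hH, hHcard, hGH⟩, huniq⟩ := hF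
  refine ⟨G.disjSum univ, disjSum_mem_joinSimplex hG univ, disjSum_mono hFG subset_rfl,
    by rw [card_disjSum, hGcard, card_univ], H.disjSum univ, ?_, ?_⟩
  · obtain ⟨hmem, hcard⟩ := (mem_joinSimplex_and_card_eq_iff (W := W) hpure).2
      ⟨H, hH, hHcard, rfl⟩
    exact ⟨hmem, hcard, disjSum_mono hGH subset_rfl⟩
  · rintro _ ⟨hmem, hcard, hsub⟩
    obtain ⟨H', hH', hH'card, rfl⟩ := (mem_joinSimplex_and_card_eq_iff hpure).1 ⟨hmem, hcard⟩
    rw [huniq H' ⟨hH', hH'card, by simpa using toLeft_subset_toLeft hsub⟩]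

lemma disjSum_erase_mem_ballBoundary (hpure : IsPure B d) {H : Finset V} (hH : H ∈ B)
    (hHcard : H.card = d + 1) (w : W) :
    H.disjSum (univ.erase w) ∈ ballBoundary (joinSimplex B W) (d + Fintype.card W) := by
  refine ⟨_, disjSum_mem_joinSimplex hH _, subset_rfl, ?_, H.disjSum univ, ?_, ?_⟩
  · rw [card_disjSum, hHcard, add_assoc, add_comm 1, card_erase_add_one (mem_univ w), card_univ]
  · obtain ⟨hmem, hcard⟩ := (mem_joinSimplex_and_card_eq_iff (W := W) hpure).2
      ⟨H, hH, hHcard, rfl⟩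
    exact ⟨hmem, hcard, disjSum_mono subset_rfl (erase_subset w univ)⟩
  · rintro _ ⟨hmem, hcard, hsub⟩
    obtain ⟨H', -, hH'card, rfl⟩ := (mem_joinSimplex_and_card_eq_iff hpure).1 ⟨hmem, hcard⟩
    have hHH' : H ⊆ H' := by simpa using toLeft_subset_toLeft hsub
    rw [eq_of_subset_of_card_le hHH' (hH'card.trans hHcard.symm).le]

lemma exists_disjSum_univ_of_notMem_ballBoundary (hpure : IsPure B d) {F : Finset (V ⊕ W)}
    (hF : F ∈ joinSimplex B W)
    (hF_int : F ∉ ballBoundary (joinSimplex B W) (d + Fintype.card W)) :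
    ∃ E ∈ B, E ∉ ballBoundary B d ∧ E.disjSum univ = F := by
  rw [mem_joinSimplex] at hF
  have hright : F.toRight = univ := by
    by_contra hne
    obtain ⟨w, hw⟩ : ∃ w, w ∉ F.toRight := by simpa [eq_univ_iff_forall] using hne
    obtain ⟨H, hH, hFH, hHcard⟩ := hpure.exists_facet _ hF
    have hsub : F ⊆ H.disjSum (univ.erase w) :=
      subset_disjSum.2 ⟨hFH, subset_erase.2 ⟨subset_univ _, hw⟩⟩
    exact hF_int <|
      mem_ballBoundary_of_subset (disjSum_erase_mem_ballBoundary hpure hH hHcard w) hsub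
  have hF_eq : F.toLeft.disjSum univ = F := hright ▸ toLeft_disjSum_toRight
  exact ⟨F.toLeft, hF, fun h => hF_int (hF_eq ▸ disjSum_univ_mem_ballBoundary hpure h), hF_eq⟩

theorem card_add_two_le_card_of_notMem_ballBoundary_joinSimplex (hB : IsComplex B)
    (hpure : IsPure B d) (hvert : ∀ F ∈ B, F.card = 1 → F ∈ ballBoundary B d)
    {F : Finset (V ⊕ W)} (hF : F ∈ joinSimplex B W)
    (hF_int : F ∉ ballBoundary (joinSimplex B W) (d + Fintype.card W)) :
    Fintype.card W + 2 ≤ F.card := by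
  obtain ⟨E, hE, hE_int, rfl⟩ := exists_disjSum_univ_of_notMem_ballBoundary hpure hF hF_int
  rw [card_disjSum, card_univ, add_comm]
  gcongr
  exact two_le_card_of_notMem_ballBoundary hB hpure hvert hE hE_int

lemma IsShelling.map_toLeft (hpure : IsPure B d) {L : List (Finset (V ⊕ W))}
    (hL : IsShelling (joinSimplex B W) (d + Fintype.card W) L) :
    IsShelling B d (L.map Finset.toLeft) := by
  obtain ⟨hnodup, hmem, hshell⟩ := hL
  replace hmem (H) := (hmem H).trans (mem_joinSimplex_and_card_eq_iff hpure)
  have hright {H} (hH : H ∈ L) : H.toRight = univ := by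
    obtain ⟨F, -, -, rfl⟩ := (hmem H).1 hH
    exact toRight_disjSum
  have disjSum_univ_subset_iff {G : Finset V} {H} (hH : H ∈ L) :
      G.disjSum univ ⊆ H ↔ G ⊆ H.toLeft := by
    simp [disjSum_subset, hright hH]
  refine ⟨hnodup.map_on fun H hH H' hH' heq => ?_, fun F => ?_, ?_⟩
  · rw [← toLeft_disjSum_toRight (u := H), ← toLeft_disjSum_toRight (u := H'), heq, hright hH,
      hright hH']
  · rw [List.mem_map]
    constructor
    · rintro ⟨_, hH, rfl⟩
      obtain ⟨F, hF, hFcard, rfl⟩ := (hmem _).1 hH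
      simpa using And.intro hF hFcard
    · exact fun hF => ⟨F.disjSum univ, (hmem _).2 ⟨F, hF.1, hF.2, rfl⟩, toLeft_disjSum⟩
  · rintro ⟨i, hi⟩ hi₀ G ⟨hGi, ⟨j, hj⟩, hji, hGj⟩
    simp only [List.length_map] at hi hj
    simp only [List.get_eq_getElem, List.getElem_map] at hGi hGj
    obtain ⟨G', hG'i, ⟨l, hli, hG'l⟩, hGG', hG'card⟩ := hshell ⟨i, hi⟩ hi₀ (G.disjSum univ)
      ⟨(disjSum_univ_subset_iff (List.getElem_mem _)).2 hGi, ⟨j, hj⟩, hji,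
        (disjSum_univ_subset_iff (List.getElem_mem _)).2 hGj⟩
    rw [disjSum_subset] at hGG'
    rw [← card_toLeft_add_card_toRight, univ_subset_iff.1 hGG'.2, card_univ] at hG'card
    refine ⟨G'.toLeft, ?_, ⟨⟨l, by simp⟩, hli, ?_⟩, hGG'.1, Nat.add_right_cancel hG'card⟩
    · simpa using toLeft_subset_toLeft hG'i
    · simpa using toLeft_subset_toLeft hG'l

theorem IsShellable.of_joinSimplex (hpure : IsPure B d)
    (h : IsShellable (joinSimplex B W) (d + Fintype.card W)) : IsShellable B d :=
  ⟨hpure.exists_facet, h.2.elim fun _ hL => ⟨_, hL.map_toLeft hpure⟩⟩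

end JoinSimplex

theorem join_with_simplex_stacked_not_shellable_general
    {V W : Type*} [Fintype V] [DecidableEq V] [Fintype W] [DecidableEq W]
    (B : Set (Finset V)) (d k : ℕ) (hW : Fintype.card W = k + 1)
    (hball : IsTriangulatedBall B d)
    (hnotshell : ¬ IsShellable B d)
    (hnoint : ∀ F ∈ B, F.card = 1 → F ∈ ballBoundary B d) :
    IsTriangulatedBall (simplicialJoin B (Set.univ : Set (Finset W))) (d + (k + 1)) ∧
    (∀ F ∈ simplicialJoin B (Set.univ : Set (Finset W)),
      F ∉ ballBoundary (simplicialJoin B (Set.univ : Set (Finset W))) (d + (k + 1)) →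
        k + 3 ≤ F.card) ∧
    ¬ IsShellable (simplicialJoin B (Set.univ : Set (Finset W))) (d + (k + 1)) := by
  refine ⟨hball.join (isTriangulatedBall_univ hW), fun F hF hF_int => ?_, fun hshell => ?_⟩
  · rw [← hW] at hF_int
    simpa only [hW] using card_add_two_le_card_of_notMem_ballBoundary_joinSimplex hball.1
      hball.isPure hnoint hF hF_int
  · rw [← hW] at hshell
    exact hnotshell (IsShellable.of_joinSimplex hball.isPure hshell)

/-- Let `B` be a non-shellable triangulated `3`-ball with
no interior vertices (such as Rudin's ball), and let `K = B ∗ σ` be the join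
of `B` with a (full) simplex `σ` of dimension `k ≥ 2` (on a vertex set `W`
of cardinality `k+1`). Then `K` is a `2`-stacked `(k+4)`-ball (it has no
interior faces of dimension at most `k+1`) which is not shellable. -/
theorem join_with_simplex_stacked_not_shellable
    {V W : Type*} [Fintype V] [DecidableEq V] [Fintype W] [DecidableEq W]
    (B : Set (Finset V)) (k : ℕ) (hk : 2 ≤ k) (hW : Fintype.card W = k + 1)
    (hball : IsTriangulatedBall B 3)
    (hnotshell : ¬ IsShellable B 3)
    (hnoint : ∀ F ∈ B, F.card = 1 → F ∈ ballBoundary B 3) :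
    IsTriangulatedBall (simplicialJoin B (Set.univ : Set (Finset W))) (k + 4) ∧
    (∀ F ∈ simplicialJoin B (Set.univ : Set (Finset W)),
      F ∉ ballBoundary (simplicialJoin B (Set.univ : Set (Finset W))) (k + 4) →
        k + 3 ≤ F.card) ∧
    ¬ IsShellable (simplicialJoin B (Set.univ : Set (Finset W))) (k + 4) := by
  rw [show k + 4 = 3 + (k + 1) by omega]
  exact join_with_simplex_stacked_not_shellable_general B 3 k hW hball hnotshell hnoint
end

section
/- Let Δ be a simplicial (d−1)-sphere (or any simplicial complex embeddable in S^{d−1}) and r ≤ d/2. Then dim Δ(d−r) ≤ d. Equivalently, Δ(d−r) contains no face of cardinality d+2. -/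
open Finset

variable {V : Type*} [DecidableEq V] [Fintype V]

/-!
A face of `Δ(d - r)` with `d + 2` vertices puts the `(d - r)`-skeleton of the `(d + 1)`-simplex into
`Δ`, hence into `S^(d-1)`; as `d ≤ 2 (d - r)`, this contradicts the van Kampen–Flores theorem.

That theorem follows from the topological Radon theorem by the constraint method. Remove from the
skeleton the faces containing a fixed face `A₀`, so that stereographic projection from the image of
the barycenter of `A₀` embeds the remaining complex `κ` into `ℝ^(d-1)`. Of two points of the simplex
with disjoint supports at least one lies in `κ`, so a Radon pair at equal distance from `κ` lies in
`κ` and contradicts injectivity.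

The topological Radon theorem is the Borsuk–Ulam theorem for `z ↦ f(z⁺) - f(z⁻)` on the vectors with
coordinate sum zero. By Weierstrass approximation, Borsuk–Ulam reduces to the existence of a real
common zero of `n` forms of the same odd degree `D` in `n + 1` variables. If there is none, the
forms are bounded below on the unit sphere, whereas for generic `η` the system
`x i ^ D + η * q i x = 0` built from their dehomogenizations `q i` has a real solution, which
becomes too small a value of the forms for large `η`: its coordinate algebra has dimension `D ^ n`
over `ℝ`, which is odd, so one of its residue fields has odd degree over `ℝ` and equals `ℝ`.
-/

section OddAlgebra

theorem exists_isMaximal_odd_finrank_quotient {k A M : Type*} [Field k] [CommRing A] [Algebra k A]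
    [AddCommGroup M] [Module A M] [instM : Module k M] [tower : IsScalarTower k A M]
    (h : Odd (Module.finrank k M)) :
    ∃ I : Ideal A, I.IsMaximal ∧ Odd (Module.finrank k (A ⧸ I)) := by
  have hfin : Module.Finite k M := Module.finite_of_finrank_pos h.pos
  have hlen : IsFiniteLength A M := isFiniteLength_iff_isNoetherian_isArtinian.2
    ⟨isNoetherian_of_tower k inferInstance, isArtinian_of_tower k inferInstance⟩
  revert instM tower
  induction hlen with
  | of_subsingleton =>
    intro _ _ h
    simp [Module.finrank_zero_of_subsingleton] at h
  | @of_simple_quotient M _ _ N hsimple _ ih =>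
    intro _ _ h hfin
    have hadd : Module.finrank k (M ⧸ N) + Module.finrank k N = Module.finrank k M := by
      rw [← (Submodule.Quotient.restrictScalarsEquiv k N).finrank_eq]
      exact (N.restrictScalars k).finrank_quotient_add_finrank
    rcases Nat.even_or_odd (Module.finrank k N) with hN | hN
    · obtain ⟨I, hI, ⟨e⟩⟩ := isSimpleModule_iff_quot_maximal.1 hsimple
      refine ⟨I, hI, ?_⟩
      rw [← (e.restrictScalars k).finrank_eq]
      exact (Nat.odd_add.1 (hadd ▸ h)).2 hN
    · exact ih hN (Module.finite_of_finrank_pos hN.pos)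

theorem nonempty_algHom_real_of_odd_finrank {A : Type*} [CommRing A] [Algebra ℝ A]
    (h : Odd (Module.finrank ℝ A)) : Nonempty (A →ₐ[ℝ] ℝ) := by
  obtain ⟨I, hI, hodd⟩ := exists_isMaximal_odd_finrank_quotient (A := A) h
  let : Field (A ⧸ I) := Ideal.Quotient.field I
  have : Module.Finite ℝ (A ⧸ I) := Module.finite_of_finrank_pos hodd.pos
  rcases Real.nonempty_algEquiv_or (A ⧸ I) with ⟨⟨e⟩⟩ | ⟨⟨e⟩⟩
  · exact ⟨e.toAlgHom.comp (Ideal.Quotient.mkₐ ℝ I)⟩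
  · rw [e.toLinearEquiv.finrank_eq, Complex.finrank_real_complex] at hodd
    exact absurd hodd (by decide)

theorem exists_eval_eq_zero_of_odd_finrank_quotient {σ ι : Type*} (F : ι → MvPolynomial σ ℝ)
    (h : Odd (Module.finrank ℝ (MvPolynomial σ ℝ ⧸ Ideal.span (Set.range F)))) :
    ∃ x : σ → ℝ, ∀ i, MvPolynomial.eval x (F i) = 0 := by
  obtain ⟨χ⟩ := nonempty_algHom_real_of_odd_finrank h
  let ψ := χ.comp (Ideal.Quotient.mkₐ ℝ (Ideal.span (Set.range F)))
  refine ⟨fun i => ψ (MvPolynomial.X i), fun i => ?_⟩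
  have hmem : Ideal.Quotient.mkₐ ℝ (Ideal.span (Set.range F)) (F i) = 0 :=
    Ideal.Quotient.eq_zero_iff_mem.2 (Ideal.subset_span ⟨i, rfl⟩)
  calc MvPolynomial.eval (fun i => ψ (MvPolynomial.X i)) (F i) = ψ (F i) := by
        conv_rhs => rw [MvPolynomial.aeval_unique ψ]
        rfl
    _ = 0 := by rw [AlgHom.comp_apply, hmem, map_zero]

end OddAlgebra

section AdicSubstitution

open MvPolynomial

section Semiring

variable {σ R : Type*} [Fintype σ] [CommSemiring R]

/-- The product `∏ i, F i ^ a i * X i ^ b i`, where `c = D • a + b` with `b i < D`: the monomial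
`X ^ c` with every factor `X i ^ D` replaced by `F i`. -/
noncomputable def adicMonomial (F : σ → MvPolynomial σ R) (D : ℕ) (c : σ →₀ ℕ) :
    MvPolynomial σ R :=
  ∏ i, F i ^ (c i / D) * X i ^ (c i % D)

theorem adicMonomial_X_pow (D : ℕ) (c : σ →₀ ℕ) :
    adicMonomial (fun i => X i ^ D : σ → MvPolynomial σ R) D c = monomial c 1 := by
  rw [monomial_eq, Finsupp.prod_fintype _ _ (fun _ => pow_zero _), map_one, one_mul]
  simp only [adicMonomial, ← pow_mul, ← pow_add, Nat.div_add_mod]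

theorem adicMonomial_single_add (F : σ → MvPolynomial σ R) {D : ℕ} (hD : 0 < D) (c : σ →₀ ℕ)
    (i : σ) : adicMonomial F D (Finsupp.single i D + c) = F i * adicMonomial F D c := by
  classical
  have hfactor (j : σ) : F j ^ ((Finsupp.single i D + c) j / D) *
      X j ^ ((Finsupp.single i D + c) j % D) =
        (if i = j then F j else 1) * (F j ^ (c j / D) * X j ^ (c j % D)) := by
    rcases eq_or_ne i j with rfl | hij
    · simp [Nat.add_div_left _ hD, pow_succ', mul_assoc]
    · simp [hij]
  simp only [adicMonomial, hfactor, prod_mul_distrib, prod_ite_eq, mem_univ, if_true]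

theorem totalDegree_adicMonomial_le {F : σ → MvPolynomial σ R} {D : ℕ}
    (hF : ∀ i, (F i).totalDegree ≤ D) (c : σ →₀ ℕ) :
    (adicMonomial F D c).totalDegree ≤ c.degree := by
  have hX (i : σ) (n : ℕ) : (X i ^ n : MvPolynomial σ R).totalDegree ≤ n := by
    rw [X_pow_eq_monomial]
    exact (totalDegree_monomial_le _ _).trans (by simp)
  rw [Finsupp.degree_eq_sum]
  refine (totalDegree_finsetProd _ _).trans (sum_le_sum fun i _ => ?_)
  calc (F i ^ (c i / D) * X i ^ (c i % D)).totalDegree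
      ≤ c i / D * D + c i % D :=
        (totalDegree_mul _ _).trans (add_le_add
          ((totalDegree_pow _ _).trans (Nat.mul_le_mul_left _ (hF i))) (hX i _))
    _ = c i := Nat.div_add_mod' _ _

theorem map_adicMonomial {S : Type*} [CommSemiring S] (f : R →+* S) (F : σ → MvPolynomial σ R)
    (D : ℕ) (c : σ →₀ ℕ) :
    map f (adicMonomial F D c) = adicMonomial (fun i => map f (F i)) D c := by
  simp [adicMonomial]

/-- The `R`-linear endomorphism of the polynomial ring that replaces `X i ^ D` by `F i`, using the
base-`D` expansion of the exponents. It is not multiplicative, but it commutes with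
multiplication by `X i ^ D` (resp. `F i`). -/
noncomputable def adicSubst (F : σ → MvPolynomial σ R) (D : ℕ) :
    MvPolynomial σ R →ₗ[R] MvPolynomial σ R :=
  (basisMonomials σ R).constr R (adicMonomial F D)

theorem adicSubst_monomial (F : σ → MvPolynomial σ R) (D : ℕ) (c : σ →₀ ℕ) (a : R) :
    adicSubst F D (monomial c a) = a • adicMonomial F D c := by
  have h := (basisMonomials σ R).constr_basis R (adicMonomial F D) c
  rw [coe_basisMonomials] at h
  rw [adicSubst, ← h, ← map_smul, smul_monomial, smul_eq_mul, mul_one]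

theorem adicSubst_X_pow_mul (F : σ → MvPolynomial σ R) {D : ℕ} (hD : 0 < D) (i : σ)
    (p : MvPolynomial σ R) : adicSubst F D (X i ^ D * p) = F i * adicSubst F D p := by
  induction p using MvPolynomial.induction_on' with
  | monomial c a =>
    rw [X_pow_eq_monomial, monomial_mul, one_mul, adicSubst_monomial, adicSubst_monomial,
      adicMonomial_single_add F hD, mul_smul_comm]
  | add p q hp hq => rw [mul_add, map_add, map_add, mul_add, hp, hq]

theorem totalDegree_adicSubst_le {F : σ → MvPolynomial σ R} {D : ℕ}
    (hF : ∀ i, (F i).totalDegree ≤ D) (p : MvPolynomial σ R) :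
    (adicSubst F D p).totalDegree ≤ p.totalDegree := by
  conv_lhs => rw [p.as_sum, map_sum]
  refine totalDegree_finsetSum_le fun c hc => ?_
  rw [adicSubst_monomial]
  exact (totalDegree_smul_le _ _).trans
    ((totalDegree_adicMonomial_le hF c).trans (le_totalDegree hc))

noncomputable instance (t : ℕ) : Fintype {c : σ →₀ ℕ // c.degree ≤ t} :=
  (Finsupp.finite_of_degree_le t).fintype

theorem adicSubst_eq_sum (F : σ → MvPolynomial σ R) (D : ℕ) {t : ℕ} {p : MvPolynomial σ R}
    (hp : p.totalDegree ≤ t) :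
    adicSubst F D p = ∑ c : {c : σ →₀ ℕ // c.degree ≤ t}, coeff c p • adicMonomial F D c := by
  have hsupport : p.support ⊆ (Finsupp.finite_of_degree_le t).toFinset := fun c hc =>
    (Set.Finite.mem_toFinset _).2 ((le_totalDegree hc).trans hp)
  calc adicSubst F D p = ∑ c ∈ p.support, coeff c p • adicMonomial F D c := by
        conv_lhs => rw [p.as_sum, map_sum]
        exact sum_congr rfl fun c _ => adicSubst_monomial F D c _
    _ = ∑ c ∈ (Finsupp.finite_of_degree_le t).toFinset, coeff c p • adicMonomial F D c :=
        sum_subset hsupport fun c _ hc => by rw [notMem_support_iff.1 hc, zero_smul]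
    _ = _ := sum_subtype _ (by simp) _

/-- The matrix of `adicSubst F D` in the monomials of degree at most `t`, with the images
truncated to these monomials; rows are indexed by the source monomials. -/
noncomputable def adicMatrix (F : σ → MvPolynomial σ R) (D t : ℕ) :
    Matrix {c : σ →₀ ℕ // c.degree ≤ t} {c : σ →₀ ℕ // c.degree ≤ t} R :=
  Matrix.of fun c c' => coeff c' (adicMonomial F D c)

theorem map_adicMatrix {S : Type*} [CommSemiring S] (f : R →+* S) (F : σ → MvPolynomial σ R)
    (D t : ℕ) : (adicMatrix F D t).map f = adicMatrix (fun i => map f (F i)) D t := by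
  ext c c'
  simp [adicMatrix, ← map_adicMonomial, coeff_map]

theorem adicMatrix_X_pow [DecidableEq σ] (D t : ℕ) :
    adicMatrix (fun i => X i ^ D : σ → MvPolynomial σ R) D t = 1 := by
  ext c c'
  simp [adicMatrix, adicMonomial_X_pow, coeff_monomial, Matrix.one_apply, Subtype.ext_iff]

theorem map_adicSubst_span_X_pow {F : σ → MvPolynomial σ R} {D : ℕ} (hD : 0 < D)
    (hsurj : Function.Surjective (adicSubst F D)) :
    ((Ideal.span (Set.range fun i => X i ^ D)).restrictScalars R).map (adicSubst F D) =
      (Ideal.span (Set.range F)).restrictScalars R := by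
  have hsum (b : σ → MvPolynomial σ R) :
      adicSubst F D (∑ i, b i * X i ^ D) = ∑ i, adicSubst F D (b i) * F i := by
    simp only [map_sum, mul_comm (b _), mul_comm _ (F _), adicSubst_X_pow_mul F hD]
  ext p
  simp only [Submodule.mem_map, Submodule.restrictScalars_mem,
    Ideal.mem_span_range_iff_exists_fun]
  constructor
  · rintro ⟨_, ⟨b, rfl⟩, rfl⟩
    exact ⟨fun i => adicSubst F D (b i), (hsum b).symm⟩
  · rintro ⟨c, rfl⟩
    choose b hb using fun i => hsurj (c i)
    exact ⟨_, ⟨b, rfl⟩, by simp only [hsum, hb]⟩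

/-- The coefficients of the monomials whose exponents are all less than `D`; these monomials form a
basis of the quotient of the polynomial ring by all the `X i ^ D`. -/
noncomputable def smallCoeffs (σ R : Type*) [Fintype σ] [CommSemiring R] (D : ℕ) :
    MvPolynomial σ R →ₗ[R] (σ → Fin D) → R :=
  LinearMap.pi fun a => lcoeff R (Finsupp.equivFunOnFinite.symm fun i => (a i : ℕ))

theorem smallCoeffs_surjective (D : ℕ) : Function.Surjective (smallCoeffs σ R D) := by
  classical
  have hinj : Function.Injective fun a : σ → Fin D =>
      Finsupp.equivFunOnFinite.symm fun i => (a i : ℕ) :=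
    Finsupp.equivFunOnFinite.symm.injective.comp Fin.val_injective.comp_left
  intro w
  refine ⟨∑ a, monomial (Finsupp.equivFunOnFinite.symm fun i => (a i : ℕ)) (w a),
    funext fun b => ?_⟩
  simp [smallCoeffs, coeff_monomial, hinj.eq_iff]

theorem ker_smallCoeffs (D : ℕ) : LinearMap.ker (smallCoeffs σ R D) =
    (Ideal.span (Set.range fun i => X i ^ D)).restrictScalars R := by
  have hrange : Set.range (fun i : σ => (X i ^ D : MvPolynomial σ R)) =
      (fun s => monomial s 1) '' Set.range fun i => Finsupp.single i D := by
    simp only [← Set.range_comp, Function.comp_def, X_pow_eq_monomial]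
  ext p
  simp only [LinearMap.mem_ker, Submodule.restrictScalars_mem, hrange,
    mem_ideal_span_monomial_image, Set.exists_range_iff, Finsupp.single_le_iff, mem_support_iff]
  constructor
  · intro h c hc
    by_contra! hlt
    apply hc
    simpa [smallCoeffs] using congrFun h fun i => ⟨c i, hlt i⟩
  · intro h
    funext a
    by_contra ha
    obtain ⟨i, hi⟩ := h _ ha
    exact (a i).isLt.not_ge (by simpa using hi)

end Semiring

section Domain

variable {σ R : Type*} [Fintype σ] [CommRing R] [IsDomain R]

theorem adicSubst_injective_of_det_ne_zero [DecidableEq σ]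
    {F : σ → MvPolynomial σ R} {D : ℕ} (h : ∀ t, (adicMatrix F D t).det ≠ 0) :
    Function.Injective (adicSubst F D) := by
  rw [injective_iff_map_eq_zero]
  intro p hp
  have hcoeff : (fun c : {c : σ →₀ ℕ // c.degree ≤ p.totalDegree} => coeff c p) = 0 := by
    refine Matrix.eq_zero_of_vecMul_eq_zero (h p.totalDegree) (funext fun c' => ?_)
    rw [adicSubst_eq_sum F D le_rfl] at hp
    simpa [Matrix.vecMul, dotProduct, adicMatrix, coeff_sum] using
      congrArg (coeff (c' : σ →₀ ℕ)) hp
  ext c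
  by_contra hc
  exact hc (congrFun hcoeff ⟨c, le_totalDegree (mem_support_iff.2 hc)⟩)

theorem countable_setOf_not_injective_adicSubst (q : σ → MvPolynomial σ R) (D : ℕ) :
    {η : R | ¬ Function.Injective
      (adicSubst (fun i => X i ^ D + C η * q i) D)}.Countable := by
  classical
  let F : σ → MvPolynomial σ (Polynomial R) := fun i =>
    X i ^ D + C Polynomial.X * map Polynomial.C (q i)
  have hF (η : R) : (fun i => map (Polynomial.evalRingHom η) (F i)) =
      fun i => X i ^ D + C η * q i := by
    have hid : (Polynomial.evalRingHom η).comp Polynomial.C = RingHom.id R := by ext; simp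
    funext i
    simp [F, MvPolynomial.map_map, hid, MvPolynomial.map_id]
  have hdet (t : ℕ) (η : R) : (adicMatrix F D t).det.eval η =
      (adicMatrix (fun i => X i ^ D + C η * q i) D t).det := by
    rw [← hF, ← map_adicMatrix, ← Polynomial.coe_evalRingHom, RingHom.map_det]
    rfl
  have hne (t : ℕ) : (adicMatrix F D t).det ≠ 0 := fun h => by
    simpa [h, adicMatrix_X_pow] using hdet t 0
  refine (Set.countable_iUnion fun t =>
    (Polynomial.finite_setOfPred_isRoot (hne t)).countable).mono fun η hη => ?_
  contrapose! hη
  refine Set.notMem_ofPred_iff.2 (not_not.2 (adicSubst_injective_of_det_ne_zero fun t ht => hη ?_))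
  exact Set.mem_iUnion.2 ⟨t, (hdet t η).trans ht⟩

end Domain

variable {σ k : Type*} [Fintype σ] [Field k]

theorem adicSubst_surjective_of_injective {F : σ → MvPolynomial σ k} {D : ℕ}
    (hF : ∀ i, (F i).totalDegree ≤ D) (hinj : Function.Injective (adicSubst F D)) :
    Function.Surjective (adicSubst F D) := by
  intro p
  let P := restrictTotalDegree σ k p.totalDegree
  have hmaps : ∀ u ∈ P, adicSubst F D u ∈ P := fun u hu =>
    (mem_restrictTotalDegree _ _ _).2
      ((totalDegree_adicSubst_le hF u).trans ((mem_restrictTotalDegree _ _ _).1 hu))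
  have hsurj : Function.Surjective ((adicSubst F D).restrict hmaps) :=
    LinearMap.surjective_of_injective fun u v huv =>
      Subtype.ext (hinj (congrArg Subtype.val huv))
  obtain ⟨u, hu⟩ := hsurj ⟨p, (mem_restrictTotalDegree _ _ _).2 le_rfl⟩
  exact ⟨u, congrArg Subtype.val hu⟩

theorem finrank_quotient_span_range_eq {F : σ → MvPolynomial σ k} {D : ℕ} (hD : 0 < D)
    (hF : ∀ i, (F i).totalDegree ≤ D) (hinj : Function.Injective (adicSubst F D)) :
    Module.finrank k (MvPolynomial σ k ⧸ Ideal.span (Set.range F)) = D ^ Fintype.card σ := by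
  classical
  have hsurj := adicSubst_surjective_of_injective hF hinj
  let e : (MvPolynomial σ k ⧸ Ideal.span (Set.range F)) ≃ₗ[k] ((σ → Fin D) → k) :=
    (Submodule.Quotient.restrictScalarsEquiv k (Ideal.span (Set.range F))).symm ≪≫ₗ
      (Submodule.Quotient.equiv _ _ (LinearEquiv.ofBijective (adicSubst F D) ⟨hinj, hsurj⟩)
        (map_adicSubst_span_X_pow hD hsurj)).symm ≪≫ₗ
      Submodule.quotEquivOfEq _ _ (ker_smallCoeffs D).symm ≪≫ₗ
      (smallCoeffs σ k D).quotKerEquivOfSurjective (smallCoeffs_surjective D)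
  rw [e.finrank_eq, Module.finrank_fintype_fun_eq_card, Fintype.card_fun, Fintype.card_fin]

theorem exists_eval_X_pow_add_eq_zero {D : ℕ} (hD : Odd D) {q : σ → MvPolynomial σ ℝ}
    (hq : ∀ i, (q i).totalDegree ≤ D) {η : ℝ}
    (hη : Function.Injective (adicSubst (fun i => X i ^ D + C η * q i) D)) :
    ∃ x : σ → ℝ, ∀ i, x i ^ D + η * eval x (q i) = 0 := by
  have hdeg (i : σ) : (X i ^ D + C η * q i).totalDegree ≤ D := by
    refine (totalDegree_add _ _).trans (max_le (totalDegree_X_pow _ _).le ?_)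
    rw [← smul_eq_C_mul]
    exact (totalDegree_smul_le _ _).trans (hq i)
  obtain ⟨x, hx⟩ := exists_eval_eq_zero_of_odd_finrank_quotient (fun i => X i ^ D + C η * q i)
    (by rw [finrank_quotient_span_range_eq hD.pos hdeg hη]; exact hD.pow)
  exact ⟨x, fun i => by simpa using hx i⟩

end AdicSubstitution

section OddForms

open MvPolynomial

theorem eval_smul_of_isHomogeneous {σ R : Type*} [CommSemiring R] {p : MvPolynomial σ R} {n : ℕ}
    (hp : p.IsHomogeneous n) (t : R) (z : σ → R) : eval (t • z) p = t ^ n * eval z p := by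
  rw [eval_eq, eval_eq, mul_sum]
  refine sum_congr rfl fun c hc => ?_
  have hdeg : ∑ i ∈ c.support, c i = n :=
    (Finsupp.degree_apply c).symm.trans (hp.degree_eq_sum_deg_support hc).symm
  simp only [Pi.smul_apply, smul_eq_mul, mul_pow, prod_mul_distrib, prod_pow_eq_pow_sum, hdeg]
  ring

theorem exists_pos_mul_norm_pow_le_norm {E F : Type*} [NormedAddCommGroup E] [NormedSpace ℝ E]
    [ProperSpace E] [NormedAddCommGroup F] [NormedSpace ℝ F] {g : E → F} (hg : Continuous g)
    {n : ℕ} (hhom : ∀ (t : ℝ) z, g (t • z) = t ^ n • g z) (hne : ∀ z ≠ 0, g z ≠ 0) :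
    ∃ δ > 0, ∀ z ≠ 0, δ * ‖z‖ ^ n ≤ ‖g z‖ := by
  obtain ⟨δ, hδ, hle⟩ := (isCompact_sphere (0 : E) 1).exists_forall_le' hg.norm.continuousOn
    fun z hz => norm_pos_iff.2 (hne z (ne_zero_of_mem_unit_sphere ⟨z, hz⟩))
  refine ⟨δ, hδ, fun z hz => ?_⟩
  have hunit := hle (‖z‖⁻¹ • z) (by simp [norm_smul, hz])
  rw [hhom, norm_smul, norm_pow, norm_inv, norm_norm, inv_pow, ← div_eq_inv_mul] at hunit
  exact (le_div_iff₀ (pow_pos (norm_pos_iff.2 hz) n)).1 hunit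

variable {σ : Type*}

theorem totalDegree_bind₁_le {τ R : Type*} [CommSemiring R] {f : σ → MvPolynomial τ R}
    (hf : ∀ i, (f i).totalDegree ≤ 1) (p : MvPolynomial σ R) :
    (bind₁ f p).totalDegree ≤ p.totalDegree := by
  rw [bind₁, aeval_def, eval₂_eq]
  refine totalDegree_finsetSum_le fun c hc => (totalDegree_mul _ _).trans ?_
  rw [algebraMap_eq, totalDegree_C, zero_add]
  calc (∏ i ∈ c.support, f i ^ c i).totalDegree
      ≤ ∑ i ∈ c.support, c i := (totalDegree_finsetProd _ _).trans (sum_le_sum fun i _ =>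
        (totalDegree_pow _ _).trans ((Nat.mul_le_mul_left _ (hf i)).trans (mul_one _).le))
    _ ≤ p.totalDegree := le_totalDegree hc

theorem exists_ne_zero_forall_eval_eq_zero [Finite σ] {D : ℕ} (hD : Odd D)
    {p : σ → MvPolynomial (Option σ) ℝ} (hp : ∀ i, (p i).IsHomogeneous D) :
    ∃ z ≠ 0, ∀ i, eval z (p i) = 0 := by
  cases nonempty_fintype σ
  by_contra! hne
  obtain ⟨δ, hδ, hle⟩ := exists_pos_mul_norm_pow_le_norm
    (g := fun (z : Option σ → ℝ) i => eval z (p i))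
    (continuous_pi fun i => MvPolynomial.continuous_eval (p i))
    (fun t z => funext fun i => eval_smul_of_isHomogeneous (hp i) t z)
    (fun z hz h => (hne z hz).elim fun i hi => hi (congrFun h i))
  let q (i : σ) : MvPolynomial σ ℝ := bind₁ (fun o : Option σ => o.elim 1 X) (p i)
  have hq (i : σ) : (q i).totalDegree ≤ D := by
    refine (totalDegree_bind₁_le (fun o => ?_) (p i)).trans (hp i).totalDegree_le
    cases o <;> simp
  obtain ⟨η, hη, hηδ⟩ := ((countable_setOf_not_injective_adicSubst q D).dense_compl ℝ)
    |>.exists_mem_open isOpen_Ioi (Set.nonempty_Ioi (a := δ⁻¹))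
  have hη_pos : 0 < η := (inv_pos.2 hδ).trans hηδ
  obtain ⟨x, hx⟩ := exists_eval_X_pow_add_eq_zero hD hq (not_not.1 hη)
  let z : Option σ → ℝ := fun o => o.elim 1 x
  have hz : z ≠ 0 := fun h => one_ne_zero (congrFun h none)
  have hz_pow : 0 < ‖z‖ ^ D := pow_pos (norm_pos_iff.2 hz) D
  have heval (i : σ) : eval z (p i) = eval x (q i) := by
    refine .trans ?_ (eval₂Hom_bind₁ (RingHom.id ℝ) x _ (p i)).symm
    congr 2
    funext o
    cases o <;> simp [z]
  have hbound : ‖fun i => eval z (p i)‖ ≤ η⁻¹ * ‖z‖ ^ D := by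
    refine (pi_norm_le_iff_of_nonneg (by positivity)).2 fun i => ?_
    have hxi : |x i| ^ D ≤ ‖z‖ ^ D := by
      gcongr
      exact norm_le_pi_norm z (some i)
    have habs : |x i| ^ D = η * |eval x (q i)| := by
      rw [← abs_pow, eq_neg_of_add_eq_zero_left (hx i), abs_neg, abs_mul, abs_of_pos hη_pos]
    rwa [heval, Real.norm_eq_abs, le_inv_mul_iff₀ hη_pos, ← habs]
  have hδ_le : δ ≤ η⁻¹ := le_of_mul_le_mul_right ((hle z hz).trans hbound) hz_pow
  exact (Set.mem_Ioi.1 hηδ).not_ge (le_inv_of_le_inv₀ hδ hδ_le)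

end OddForms

section BorsukUlam

open MvPolynomial

theorem exists_isHomogeneous_eval_eq_sub {σ R : Type*} [Fintype σ] [CommRing R]
    (p : MvPolynomial σ R) :
    ∃ N, ∀ D ≥ N, Odd D → ∃ q : MvPolynomial σ R, q.IsHomogeneous D ∧
      ∀ z, ∑ i, z i ^ 2 = 1 → eval z q = eval z p - eval (-z) p := by
  induction p using MvPolynomial.induction_on' with
  | monomial c a =>
    have hneg (z : σ → R) : eval (-z) (monomial c a) = (-1) ^ c.degree * eval z (monomial c a) := by
      rw [← eval_smul_of_isHomogeneous (isHomogeneous_monomial a rfl), neg_one_smul]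
    refine ⟨c.degree, fun D hDc hD => ?_⟩
    rcases Nat.even_or_odd c.degree with hc | hc
    · exact ⟨0, isHomogeneous_zero _ _ _, fun z _ => by rw [hneg, hc.neg_one_pow]; simp⟩
    · obtain ⟨e, he⟩ := (Nat.Odd.sub_odd hD hc).two_dvd
      refine ⟨monomial c (2 * a) * (∑ i, X i ^ 2) ^ e, ?_, fun z hz => ?_⟩
      · rw [← Nat.add_sub_cancel' hDc, he]
        exact (isHomogeneous_monomial _ rfl).mul
          ((IsHomogeneous.sum _ _ 2 fun i _ => isHomogeneous_X_pow i 2).pow e)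
      · rw [hneg, hc.neg_one_pow]
        simp only [map_mul, map_pow, map_sum, eval_X, hz, one_pow, mul_one, eval_monomial]
        ring
  | add p₁ p₂ h₁ h₂ =>
    obtain ⟨N₁, h₁⟩ := h₁
    obtain ⟨N₂, h₂⟩ := h₂
    refine ⟨max N₁ N₂, fun D hND hD => ?_⟩
    obtain ⟨q₁, hq₁, heval₁⟩ := h₁ D (le_of_max_le_left hND) hD
    obtain ⟨q₂, hq₂, heval₂⟩ := h₂ D (le_of_max_le_right hND) hD
    refine ⟨q₁ + q₂, hq₁.add hq₂, fun z hz => ?_⟩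
    rw [map_add, map_add, map_add, heval₁ z hz, heval₂ z hz]
    ring

theorem exists_forall_norm_eval_sub_lt {σ : Type*} {K : Set (σ → ℝ)} (hK : IsCompact K)
    {f : (σ → ℝ) → ℝ} (hf : ContinuousOn f K) {ε : ℝ} (hε : 0 < ε) :
    ∃ p : MvPolynomial σ ℝ, ∀ z ∈ K, ‖eval z p - f z‖ < ε := by
  have : CompactSpace K := isCompact_iff_compactSpace.1 hK
  let ψ : MvPolynomial σ ℝ →ₐ[ℝ] C(K, ℝ) :=
    aeval fun i => ⟨fun z => z.1 i, (continuous_apply i).comp continuous_subtype_val⟩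
  have hψ (p : MvPolynomial σ ℝ) (z : K) : ψ p z = eval z.1 p := by
    induction p using MvPolynomial.induction_on with
    | C a => simp [ψ]
    | add p q hp hq => simp [hp, hq]
    | mul_X p i hp => rw [map_mul, ContinuousMap.mul_apply, hp]; simp [ψ]
  have hsep : ψ.range.SeparatesPoints := fun x y hxy => by
    obtain ⟨i, hi⟩ := Function.ne_iff.1 (Subtype.coe_ne_coe.2 hxy)
    exact ⟨ψ (X i), ⟨ψ (X i), ⟨X i, rfl⟩, rfl⟩, by simpa [hψ] using hi⟩
  obtain ⟨⟨_, p, rfl⟩, hp⟩ :=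
    ContinuousMap.exists_mem_subalgebra_near_continuous_of_separatesPoints ψ.range hsep _
      hf.domRestrict ε hε
  exact ⟨p, fun z hz => (congrArg (‖· - f z‖) (hψ p ⟨z, hz⟩)).symm.trans_lt (hp ⟨z, hz⟩)⟩

theorem isCompact_setOf_sum_sq_eq_one (ι : Type*) [Fintype ι] :
    IsCompact {z : ι → ℝ | ∑ i, z i ^ 2 = 1} := by
  convert (EuclideanSpace.equiv ι ℝ).symm.toHomeomorph.isCompact_preimage.2
    (isCompact_sphere (0 : EuclideanSpace ℝ ι) 1)
  simp [EuclideanSpace.sphere_zero_eq]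

variable {σ : Type*}

theorem exists_forall_eval_eq_eval_neg [Fintype σ] (p : σ → MvPolynomial (Option σ) ℝ) :
    ∃ z : Option σ → ℝ, ∑ i, z i ^ 2 = 1 ∧ ∀ i, eval z (p i) = eval (-z) (p i) := by
  choose N hN using fun i => exists_isHomogeneous_eval_eq_sub (p i)
  have hND (i : σ) : 2 * ∑ j, N j + 1 ≥ N i := by
    have := single_le_sum (fun j _ => Nat.zero_le (N j)) (mem_univ i)
    lia
  choose q hq heval using fun i => hN i _ (hND i) (odd_two_mul_add_one _)
  obtain ⟨z, hz, hzero⟩ := exists_ne_zero_forall_eval_eq_zero (odd_two_mul_add_one _) hq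
  have hsum : 0 < ∑ i, z i ^ 2 := by
    obtain ⟨i, hi⟩ := Function.ne_iff.1 hz
    exact sum_pos' (fun j _ => sq_nonneg (z j)) ⟨i, mem_univ i, sq_pos_of_ne_zero hi⟩
  let w := (√(∑ i, z i ^ 2))⁻¹ • z
  have hw : ∑ i, w i ^ 2 = 1 := by
    simp only [w, Pi.smul_apply, smul_eq_mul, mul_pow, ← mul_sum, inv_pow, Real.sq_sqrt hsum.le]
    exact inv_mul_cancel₀ hsum.ne'
  refine ⟨w, hw, fun i => sub_eq_zero.1 ?_⟩
  rw [← heval i w hw, eval_smul_of_isHomogeneous (hq i), hzero i, mul_zero]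

theorem exists_ne_zero_eq_zero_of_odd_pi [Finite σ] {g : (Option σ → ℝ) → σ → ℝ}
    (hg : ContinuousOn g {0}ᶜ) (hodd : Function.Odd g) : ∃ z ≠ 0, g z = 0 := by
  cases nonempty_fintype σ
  by_contra! hne
  let K := {z : Option σ → ℝ | ∑ i, z i ^ 2 = 1}
  have hK : IsCompact K := isCompact_setOf_sum_sq_eq_one _
  have hK_ne : K ⊆ {0}ᶜ := by
    rintro _ hz rfl
    simp [K] at hz
  obtain ⟨δ, hδ, hle⟩ := hK.exists_forall_le' (hg.mono hK_ne).norm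
    fun z hz => norm_pos_iff.2 (hne z (hK_ne hz))
  choose p hp using fun i => exists_forall_norm_eval_sub_lt hK
    (continuousOn_pi.1 (hg.mono hK_ne) i) (half_pos hδ)
  obtain ⟨z, hz, heq⟩ := exists_forall_eval_eq_eval_neg p
  have hlt : ‖g z‖ < δ := (pi_norm_lt_iff hδ).2 fun i => by
    have hpos := hp i z hz
    have hneg := hp i (-z) (by simpa [K] using hz)
    rw [hodd, ← heq i, Pi.neg_apply] at hneg
    rw [Real.norm_eq_abs, abs_lt] at *
    constructor <;> linarith
  exact hlt.not_ge (hle z hz)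

theorem exists_linearMap_injective_of_card_le_finrank {ι k E : Type*} [Fintype ι] [CommRing k]
    [Nontrivial k] [AddCommGroup E] [Module k E] (h : Fintype.card ι ≤ Module.finrank k E) :
    ∃ L : (ι → k) →ₗ[k] E, Function.Injective L := by
  obtain ⟨v, hv⟩ := exists_linearIndependent_of_le_finrank h
  let e := Fintype.equivFin ι
  exact ⟨Fintype.linearCombination k (v ∘ e),
    (hv.comp e e.injective).fintypeLinearCombination_injective⟩

/-- The Borsuk–Ulam theorem. -/
theorem exists_ne_zero_eq_zero_of_odd {E F : Type*}
    [AddCommGroup E] [Module ℝ E] [TopologicalSpace E] [IsTopologicalAddGroup E]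
    [ContinuousSMul ℝ E] [AddCommGroup F] [Module ℝ F] [TopologicalSpace F]
    [IsTopologicalAddGroup F] [ContinuousSMul ℝ F] [T2Space F] [FiniteDimensional ℝ F]
    (hdim : Module.finrank ℝ F < Module.finrank ℝ E) {g : E → F}
    (hg : ContinuousOn g {0}ᶜ) (hodd : Function.Odd g) : ∃ z ≠ 0, g z = 0 := by
  let σ := Fin (Module.finrank ℝ F)
  obtain ⟨L, hL⟩ := exists_linearMap_injective_of_card_le_finrank (ι := Option σ) (k := ℝ) (E := E)
    (by simpa [σ] using hdim)
  have hL_ne : ∀ z ≠ 0, L z ≠ 0 := fun z hz => (map_ne_zero_iff L hL).2 hz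
  let e : F ≃L[ℝ] (σ → ℝ) := ContinuousLinearEquiv.ofFinrankEq (by simp [σ])
  obtain ⟨z, hz, hzero⟩ := exists_ne_zero_eq_zero_of_odd_pi (g := fun z => e (g (L z)))
    (e.continuous.comp_continuousOn (hg.comp L.continuous_on_pi.continuousOn hL_ne))
    (fun z => by simp [hodd (L z)])
  exact ⟨L z, hL_ne z hz, e.map_eq_zero_iff.1 hzero⟩

end BorsukUlam

section TopologicalRadon

variable {ι : Type*} [Fintype ι]

theorem sum_posPart_pos {z : ι → ℝ} (hz : z ≠ 0) (hsum : ∑ i, z i = 0) : 0 < ∑ i, (z i)⁺ := by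
  by_contra! hle
  have hpos : ∀ i, (z i)⁺ = 0 := fun i =>
    (sum_eq_zero_iff_of_nonneg fun j _ => posPart_nonneg (z j)).1
      (hle.antisymm (sum_nonneg fun j _ => posPart_nonneg (z j))) i (mem_univ i)
  have hnonpos : ∀ i, z i ≤ 0 := fun i => posPart_eq_zero.1 (hpos i)
  exact hz (funext fun i => (sum_eq_zero_iff_of_nonpos fun j _ => hnonpos j).1 hsum i (mem_univ i))

/-- The positive part of a vector, scaled to have coordinate sum `1`. -/
noncomputable def normalizedPosPart (z : ι → ℝ) : ι → ℝ := (∑ i, (z i)⁺)⁻¹ • z⁺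

theorem normalizedPosPart_mem_stdSimplex {z : ι → ℝ} (hz : z ≠ 0) (hsum : ∑ i, z i = 0) :
    normalizedPosPart z ∈ stdSimplex ℝ ι := by
  refine ⟨fun i => mul_nonneg (inv_nonneg.2 (sum_posPart_pos hz hsum).le) (posPart_nonneg _), ?_⟩
  simp only [normalizedPosPart, Pi.smul_apply, smul_eq_mul, ← mul_sum, Pi.posPart_apply]
  exact inv_mul_cancel₀ (sum_posPart_pos hz hsum).ne'

theorem disjoint_support_normalizedPosPart_neg (z : ι → ℝ) :
    Disjoint (Function.support (normalizedPosPart z))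
      (Function.support (normalizedPosPart (-z))) := by
  refine Set.disjoint_left.2 fun i hi hi' => ?_
  rcases le_total (z i) 0 with h | h
  · exact hi (by simp [normalizedPosPart, h])
  · exact hi' (by simp [normalizedPosPart, h])

theorem continuousOn_normalizedPosPart :
    ContinuousOn (normalizedPosPart (ι := ι)) {z | ∑ i, (z i)⁺ ≠ 0} := by
  have hsum : Continuous fun z : ι → ℝ => ∑ i, (z i)⁺ :=
    continuous_finsetSum _ fun i _ => continuous_posPart.comp (continuous_apply i)
  have hpos : Continuous fun z : ι → ℝ => z⁺ :=
    continuous_pi fun i => continuous_posPart.comp (continuous_apply i)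
  exact (hsum.continuousOn.inv₀ fun _ hz => hz).smul hpos.continuousOn

variable (ι) in
theorem exists_submodule_sum_eq_zero :
    ∃ H : Submodule ℝ (ι → ℝ),
      (∀ z ∈ H, ∑ i, z i = 0) ∧ Fintype.card ι ≤ Module.finrank ℝ H + 1 := by
  let s : (ι → ℝ) →ₗ[ℝ] ℝ := ∑ i, LinearMap.proj i
  refine ⟨LinearMap.ker s, fun z hz => ?_, ?_⟩
  · simpa only [s, LinearMap.mem_ker, LinearMap.sum_apply, LinearMap.proj_apply] using hz
  · have hrank := s.finrank_range_add_finrank_ker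
    have hrange := Submodule.finrank_le (LinearMap.range s)
    rw [Module.finrank_self] at hrange
    rw [Module.finrank_fintype_fun_eq_card] at hrank
    lia

variable {F : Type*} [AddCommGroup F] [Module ℝ F] [TopologicalSpace F]
  [IsTopologicalAddGroup F] [ContinuousSMul ℝ F] [T2Space F] [FiniteDimensional ℝ F]

/-- The topological Radon theorem. -/
theorem exists_disjoint_support_eq (hdim : Module.finrank ℝ F + 2 ≤ Fintype.card ι)
    {f : (ι → ℝ) → F} (hf : ContinuousOn f (stdSimplex ℝ ι)) :
    ∃ x ∈ stdSimplex ℝ ι, ∃ y ∈ stdSimplex ℝ ι,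
      Disjoint (Function.support x) (Function.support y) ∧ f x = f y := by
  obtain ⟨H, hH, hcard⟩ := exists_submodule_sum_eq_zero ι
  have hmem : ∀ z : H, z ≠ 0 → normalizedPosPart (z : ι → ℝ) ∈ stdSimplex ℝ ι := fun z hz =>
    normalizedPosPart_mem_stdSimplex (Subtype.coe_ne_coe.2 hz) (hH z z.2)
  have hcont : ContinuousOn (fun z : H => f (normalizedPosPart (z : ι → ℝ))) {0}ᶜ :=
    hf.comp (continuousOn_normalizedPosPart.comp continuous_subtype_val.continuousOn
      fun z hz => (sum_posPart_pos (Subtype.coe_ne_coe.2 hz) (hH z z.2)).ne') hmem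
  obtain ⟨z, hz, hzero⟩ := exists_ne_zero_eq_zero_of_odd (by lia)
    (hcont.sub (hcont.comp continuous_neg.continuousOn fun _ => neg_ne_zero.2))
    (fun z => by simp only [Function.comp_apply, Pi.sub_apply, neg_neg, neg_sub])
  refine ⟨_, hmem z hz, _, hmem (-z) (neg_ne_zero.2 hz), ?_, sub_eq_zero.1 hzero⟩
  rw [H.coe_neg]
  exact disjoint_support_normalizedPosPart_neg _

/- The constraint method: appending the distance to `κ` to the map forces the Radon pair into `κ`,
at the cost of one dimension. -/
theorem not_injective_of_forall_disjoint_support {κ : Set (ι → ℝ)} (hκ : IsClosed κ)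
    (hpair : ∀ x ∈ stdSimplex ℝ ι, ∀ y ∈ stdSimplex ℝ ι,
      Disjoint (Function.support x) (Function.support y) → x ∈ κ ∨ y ∈ κ)
    (hdim : Module.finrank ℝ F + 3 ≤ Fintype.card ι) {ψ : κ → F}
    (hψ : Continuous ψ) : ¬ Function.Injective ψ := by
  intro hinj
  have := TietzeExtension.of_tvs ℝ (E := F)
  obtain ⟨G, hG⟩ := ContinuousMap.exists_restrict_eq hκ ⟨ψ, hψ⟩
  have hGψ : ∀ x : κ, G x = ψ x := DFunLike.congr_fun hG
  obtain ⟨x, hx, y, hy, hxy, heq⟩ := exists_disjoint_support_eq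
    (F := ℝ × F) (f := fun x => (Metric.infDist x κ, G x))
    (by rw [Module.finrank_prod, Module.finrank_self]; lia)
    ((Metric.continuous_infDist_pt κ).prodMk G.continuous).continuousOn
  obtain ⟨hdist, hGxy⟩ := Prod.ext_iff.1 heq
  have hor := hpair x hx y hy hxy
  have hκ_ne : κ.Nonempty := hor.elim (fun h => ⟨x, h⟩) fun h => ⟨y, h⟩
  have hiff : x ∈ κ ↔ y ∈ κ := by
    rw [hκ.mem_iff_infDist_zero hκ_ne, hκ.mem_iff_infDist_zero hκ_ne]
    exact Eq.congr_left hdist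
  have hxκ : x ∈ κ := hor.elim id hiff.2
  have hψxy : ψ ⟨x, hxκ⟩ = ψ ⟨y, hiff.1 hxκ⟩ := by rw [← hGψ, ← hGψ]; exact hGxy
  obtain rfl : x = y := congrArg Subtype.val (hinj hψxy)
  have hx_zero : x = 0 := Function.support_eq_empty_iff.1 (disjoint_self.1 hxy)
  simpa [hx_zero] using hx.2

end TopologicalRadon

section VanKampenFlores

variable {ι : Type*} [Fintype ι]

theorem realization_mono {Γ Δ : Set (Finset ι)} (h : Γ ⊆ Δ) : realization Γ ⊆ realization Δ :=
  fun _ ⟨hnonneg, hsum, A, hA, hsupp⟩ => ⟨hnonneg, hsum, A, h hA, hsupp⟩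

theorem realization_eq_biUnion (Δ : Set (Finset ι)) :
    realization Δ = ⋃ A ∈ Δ, stdSimplex ℝ ι ∩ {x | ∀ i ∉ A, x i = 0} := by
  ext x
  simp only [realization, stdSimplex, Set.mem_iUnion, Set.mem_inter_iff, Set.mem_ofPred_eq,
    not_imp_comm]
  tauto

theorem isClosed_realization (Δ : Set (Finset ι)) : IsClosed (realization Δ) := by
  rw [realization_eq_biUnion]
  refine Set.Finite.isClosed_biUnion (Set.toFinite Δ) fun A _ => (isClosed_stdSimplex ℝ ι).inter ?_
  simp only [Set.ofPred_forall]
  exact isClosed_biInter fun i _ => isClosed_eq (continuous_apply i) continuous_const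

theorem centroidWeightsIndicator_mem_realization_iff {Δ : Set (Finset ι)} {A : Finset ι}
    (hA : A.Nonempty) : A.centroidWeightsIndicator ℝ ∈ realization Δ ↔ ∃ B ∈ Δ, A ⊆ B := by
  have hpos : 0 < (#A : ℝ)⁻¹ := inv_pos.2 (Nat.cast_pos.2 hA.card_pos)
  have hsupp (i : ι) : A.centroidWeightsIndicator ℝ i ≠ 0 ↔ i ∈ A := by
    simp [centroidWeightsIndicator_def, hA.ne_empty]
  have hnonneg (i : ι) : 0 ≤ A.centroidWeightsIndicator ℝ i :=
    Set.indicator_nonneg (fun _ _ => hpos.le) i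
  simp only [realization, Set.mem_ofPred_eq, hsupp, hnonneg, implies_true, true_and,
    A.sum_centroidWeightsIndicator_eq_one_of_nonempty ℝ hA, subset_iff]

theorem extend_zero_mem_realization {κ : Type*} [Fintype κ] (e : ι ↪ κ)
    {Γ : Set (Finset ι)} {Δ : Set (Finset κ)} (hΓ : ∀ A ∈ Γ, A.map e ∈ Δ) {x : ι → ℝ}
    (hx : x ∈ realization Γ) : Function.extend e x (0 : κ → ℝ) ∈ realization Δ := by
  obtain ⟨hnonneg, hsum, A, hA, hsupp⟩ := hx
  have hzero (v : κ) (hv : v ∉ Set.range e) : Function.extend e x (0 : κ → ℝ) v = 0 :=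
    Function.extend_apply' x (0 : κ → ℝ) v hv
  refine ⟨fun v => ?_, ?_, A.map e, hΓ A hA, fun v hv => ?_⟩
  · by_cases hv : v ∈ Set.range e
    · obtain ⟨i, rfl⟩ := hv
      rw [e.injective.extend_apply]
      exact hnonneg i
    · exact (hzero v hv).ge
  · rw [← hsum]
    exact (Fintype.sum_of_injective e e.injective _ _ hzero
      fun i => (e.injective.extend_apply x 0 i).symm).symm
  · obtain ⟨i, rfl⟩ := not_imp_comm.1 (hzero v) hv
    rw [e.injective.extend_apply] at hv
    exact mem_map_of_mem e (hsupp i hv)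

/- Disjoint `A` and `B` cannot both contain `A₀`. The smaller one has at most `k + 1` elements; if
it contains `A₀`, then the other one has at most `card ι - #A₀ ≤ k + 1` elements. -/
theorem mem_realization_or_mem_realization_of_disjoint_support {k : ℕ} {A₀ : Finset ι}
    (hne : A₀.Nonempty) (hA₀ : #A₀ ≤ k + 1) (hcard : Fintype.card ι ≤ #A₀ + (k + 1))
    {x y : ι → ℝ} (hx : x ∈ stdSimplex ℝ ι) (hy : y ∈ stdSimplex ℝ ι)
    (hxy : Disjoint (Function.support x) (Function.support y)) :
    x ∈ realization (skel {A | ¬ A₀ ⊆ A} k) ∨ y ∈ realization (skel {A | ¬ A₀ ⊆ A} k) := by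
  classical
  let A : Finset ι := {i | x i ≠ 0}
  let B : Finset ι := {i | y i ≠ 0}
  have hAB : Disjoint A B := by
    rwa [← disjoint_coe, coe_filter_univ, coe_filter_univ]
  have hsum : #A + #B ≤ Fintype.card ι := by
    rw [← card_union_of_disjoint hAB]
    exact card_le_univ _
  have hsub : ¬ (A₀ ⊆ A ∧ A₀ ⊆ B) := fun h => hne.ne_empty (subset_empty.1 (hAB h.1 h.2))
  have hA_card : A₀ ⊆ A → #A₀ ≤ #A := card_le_card
  have hB_card : A₀ ⊆ B → #A₀ ≤ #B := card_le_card
  have hor : A ∈ skel {A | ¬ A₀ ⊆ A} k ∨ B ∈ skel {A | ¬ A₀ ⊆ A} k := by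
    simp only [skel, Set.mem_ofPred_eq]
    grind
  exact hor.imp (fun hA => ⟨hx.1, hx.2, A, hA, fun i hi => mem_filter_univ i |>.2 hi⟩)
    fun hB => ⟨hy.1, hy.2, B, hB, fun i hi => mem_filter_univ i |>.2 hi⟩

variable {E : Type*} [NormedAddCommGroup E] [InnerProductSpace ℝ E] [FiniteDimensional ℝ E]

/-- The van Kampen–Flores theorem. -/
theorem not_injective_realization_skel {k : ℕ} (hE : Module.finrank ℝ E + 2 ≤ Fintype.card ι)
    (hk : Fintype.card ι ≤ 2 * k + 2)
    {φ : realization (skel (Set.univ : Set (Finset ι)) k) → Metric.sphere (0 : E) 1}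
    (hφ : Continuous φ) : ¬ Function.Injective φ := by
  intro hinj
  obtain ⟨A₀, -, hA₀⟩ := exists_subset_card_eq (s := (univ : Finset ι)) (n := min (k + 1) #univ)
    (min_le_right _ _)
  rw [card_univ] at hA₀
  have hne : A₀.Nonempty := card_pos.1 (by lia)
  let Γ := skel {A | ¬ A₀ ⊆ A} k
  have hΓ : realization Γ ⊆ realization (skel Set.univ k) :=
    realization_mono fun _ hA => ⟨Set.mem_univ _, hA.2⟩
  let p : realization (skel Set.univ k) := ⟨A₀.centroidWeightsIndicator ℝ,
    (centroidWeightsIndicator_mem_realization_iff hne).2 ⟨A₀, ⟨Set.mem_univ _, by lia⟩, Subset.rfl⟩⟩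
  have hp : p.1 ∉ realization Γ := by
    rw [centroidWeightsIndicator_mem_realization_iff hne]
    exact fun ⟨A, hA, hsub⟩ => hA.1 hsub
  have hnorm : ‖(φ p : E)‖ = 1 := norm_eq_of_mem_sphere (φ p)
  have hsource (x : realization Γ) : φ (Set.inclusion hΓ x) ∈ (stereographic hnorm).source := by
    rw [stereographic_source]
    exact fun h => hp (congrArg Subtype.val (hinj h) ▸ x.2)
  have hne_zero : (φ p : E) ≠ 0 := ne_zero_of_mem_unit_sphere (φ p)
  have hdim : Module.finrank ℝ (ℝ ∙ (φ p : E))ᗮ + 1 = Module.finrank ℝ E := by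
    rw [← (ℝ ∙ (φ p : E)).finrank_add_finrank_orthogonal,
      finrank_span_singleton hne_zero, add_comm]
  refine not_injective_of_forall_disjoint_support (isClosed_realization Γ)
    (fun x hx y hy => mem_realization_or_mem_realization_of_disjoint_support hne (by lia) (by lia)
      hx hy) (by lia)
    ((stereographic hnorm).continuousOn.comp_continuous (hφ.comp (continuous_inclusion hΓ)) hsource)
    fun x y h => ?_
  exact Set.inclusion_injective hΓ (hinj ((stereographic hnorm).injOn (hsource x) (hsource y) h))

end VanKampenFlores

/-- Let `Δ` be a simplicial complex embeddable in the
sphere `S^{d-1}` (e.g. a simplicial `(d-1)`-sphere) and `r ≤ d/2`. Then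
`dim Δ(d-r) ≤ d`; equivalently, `Δ(d-r)` contains no face of cardinality
`d+2`. -/
theorem skc_dim_le_of_embeddable
    {V : Type*} [Fintype V] [DecidableEq V]
    (Δ : Set (Finset V)) (hΔ : IsComplex Δ) (d r : ℕ)
    (hr1 : 1 ≤ r) (hr2 : 2 * r ≤ d)
    (hemb : ∃ φ : ↥(realization Δ) → EuclideanSpace ℝ (Fin d),
      Continuous φ ∧ Function.Injective φ ∧ ∀ x, ‖φ x‖ = 1) :
    ∀ F ∈ skc Δ (d - r), F.card ≤ d + 1 := by
  obtain ⟨φ, hφ, hinj, hnorm⟩ := hemb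
  intro F hF
  by_contra! hcard
  obtain ⟨F', hF', hcard'⟩ := exists_subset_card_eq (Nat.succ_le_of_lt hcard)
  let e : F' ↪ V := Function.Embedding.subtype _
  have hface : ∀ A ∈ skel Set.univ (d - r), A.map e ∈ Δ := fun A hA =>
    hF _ ((map_subtype_subset A).trans hF') ((card_map e).trans_le hA.2)
  let j : realization (skel (Set.univ : Set (Finset F')) (d - r)) → realization Δ :=
    fun x => ⟨Function.extend e x.1 0, extend_zero_mem_realization e hface x.2⟩
  have hj : Continuous j := ((Function.ExtendByZero.linearMap ℝ e).continuous_on_pi.comp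
    continuous_subtype_val).subtype_mk _
  have hj_inj : Function.Injective j := fun x y h =>
    Subtype.ext (Function.extend_injective e.injective (0 : V → ℝ) (congrArg Subtype.val h))
  have hF'_card : Fintype.card F' = d + 2 := (Fintype.card_coe F').trans hcard'
  exact not_injective_realization_skel (by rw [finrank_euclideanSpace_fin]; lia) (by lia)
    ((hφ.comp hj).subtype_mk fun x => mem_sphere_zero_iff_norm.2 (hnorm (j x)))
    fun x y h => hj_inj (hinj (congrArg Subtype.val h))
end
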